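/- arXiv:gr-qc/0609074 — 3 statements merged into one kernel-verified Lean document; each statement's English description precedes it below -/
import Mathlib

section
/- Let k ≥ 0 be an integer and let φ: (0,1) → [0,∞) be C^k with |(1−ℰ)^k φ^{(k)}(ℰ)| ≤ C(1−ℰ)^{−1+ε} for some constants C, ε > 0 for all ℰ in a neighborhood of 1. Then for every real i > −1, the function g_i(η) = ∫_{e^{−η}}^{1} φ(ℰ)·[(ℰ² − e^{−2η})/2]^i dℰ is C^{[i]+k+1} on (0,∞), where [i] is the largest integer ≤ i. If moreover i ∉ ℕ and the function ℰ ↦ (1−ℰ)^k φ^{(k)}(ℰ) is Hölder continuous on (0,1) with exponent α > 1 + [i] − i, then g_i is C^{[i]+k+2} on (0,∞). -/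
open Filter Set

/-- The kinetic integrals `g_i(η) = ∫_{e^{-η}}^1 φ(ℰ) [(ℰ² - e^{-2η})/2]^i dℰ`. -/
noncomputable def gfun (φ : ℝ → ℝ) (i η : ℝ) : ℝ :=
  ∫ E in Real.exp (-η)..1, φ E * (((E ^ 2 - Real.exp (-2 * η)) / 2) ^ i)

open MeasureTheory Topology Asymptotics ContDiff

/-!
The substitution `u = ℰ²` turns `g_i(η)` into `2⁻ⁱ (A_i ψ)(e^{-2η})`, where
`A_i ψ(s) = ∫_s^∞ ψ(u) (u - s)^i du` is a Weyl fractional integral and `ψ` is as regular as `φ`.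
Differentiating under the integral gives `(A_i f)' = -i A_{i-1} f` for `i > 0`, and `(A_0 f)' = -f`,
so `A_i` gains `⌊i⌋ + 1` derivatives. When `i ∉ ℕ` the descent stops at an exponent `i ∈ (-1, 0)`,
where integration by parts expresses `A_i (F')` through the Marchaud integral
`∫_0^∞ (F(s + t) - F(s)) t^{i-1} dt`; differentiating it once more needs exactly that `F'` is Hölder
continuous with an exponent above `-i`. All of this is local at `s`: away from the diagonal the
kernel is smooth, so the behaviour of `φ` near `ℰ = 1` matters only through integrability, which
follows from the growth condition on `φ^{(k)}` by integrating `k` times.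
-/

/-- `f` is Hölder continuous with exponent `α` on some neighbourhood of `x`. Both points of a pair
range over that neighbourhood, so this is stronger than an estimate of `f y - f x` alone. -/
def LocallyHolderAt (α : ℝ) (f : ℝ → ℝ) (x : ℝ) : Prop :=
  (fun p : ℝ × ℝ => f p.1 - f p.2) =O[𝓝 (x, x)] fun p => |p.1 - p.2| ^ α

theorem tendsto_abs_sub_nhds_diag (x : ℝ) :
    Tendsto (fun p : ℝ × ℝ => |p.1 - p.2|) (𝓝 (x, x)) (𝓝[≥] 0) :=
  tendsto_nhdsWithin_iff.2 ⟨Continuous.tendsto' (by fun_prop) _ _ (by simp),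
    .of_forall fun p => abs_nonneg (p.1 - p.2)⟩

theorem locallyHolderAt_of_contDiffAt {α x : ℝ} {f : ℝ → ℝ} (hf : ContDiffAt ℝ 1 f x)
    (hα : α ≤ 1) : LocallyHolderAt α f x := by
  have hpow := (IsBigO.id_rpow_of_le_one hα).comp_tendsto (tendsto_abs_sub_nhds_diag x)
  exact (hf.hasStrictDerivAt one_ne_zero).hasStrictFDerivAt.isBigO_sub.trans
    (isBigO_abs_left.1 hpow)

namespace LocallyHolderAt

variable {α β x : ℝ} {f g σ : ℝ → ℝ}

theorem of_forall_abs_sub_le {C : ℝ} {u : Set ℝ} (hu : u ∈ 𝓝 x)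
    (h : ∀ y ∈ u, ∀ z ∈ u, |f y - f z| ≤ C * |y - z| ^ α) : LocallyHolderAt α f x := by
  refine .of_bound C ?_
  filter_upwards [prod_mem_nhds hu hu] with p hp
  rw [Real.norm_eq_abs, Real.norm_of_nonneg (by positivity)]
  exact h p.1 hp.1 p.2 hp.2

theorem eventually (hf : LocallyHolderAt α f x) : ∀ᶠ y in 𝓝 x, LocallyHolderAt α f y := by
  obtain ⟨C, hC⟩ := hf.bound
  exact (Continuous.tendsto' (f := fun y : ℝ => (y, y)) (by fun_prop) x _ rfl |>.eventually
    (eventually_eventually_nhds.2 hC)).mono fun _ => IsBigO.of_bound C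

theorem congr_of_eventuallyEq (hf : LocallyHolderAt α f x) (hfg : f =ᶠ[𝓝 x] g) :
    LocallyHolderAt α g x := by
  refine hf.congr' ?_ .rfl
  filter_upwards [continuousAt_fst.eventually hfg, continuousAt_snd.eventually hfg]
    with p h₁ h₂ using congr_arg₂ _ h₁ h₂

theorem mono (hf : LocallyHolderAt α f x) (hα : α ≠ 0) (hβ : β ≤ α) : LocallyHolderAt β f x :=
  hf.trans <| (IsBigO.rpow_rpow_nhdsGE_zero_of_le hβ hα).comp_tendsto (tendsto_abs_sub_nhds_diag x)

theorem add (hf : LocallyHolderAt α f x) (hg : LocallyHolderAt α g x) :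
    LocallyHolderAt α (fun y => f y + g y) x :=
  (IsBigO.add hf hg).congr_left fun _ => (add_sub_add_comm ..).symm

theorem mul (hf : LocallyHolderAt α f x) (hg : LocallyHolderAt α g x) (hfc : ContinuousAt f x)
    (hgc : ContinuousAt g x) : LocallyHolderAt α (fun y => f y * g y) x := by
  have hf1 : (fun p : ℝ × ℝ => f p.1) =O[𝓝 (x, x)] fun _ => (1 : ℝ) :=
    (hfc.comp (x := (x, x)) continuousAt_fst).isBigO_one ℝ
  have hg1 : (fun p : ℝ × ℝ => g p.2) =O[𝓝 (x, x)] fun _ => (1 : ℝ) :=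
    (hgc.comp (x := (x, x)) continuousAt_snd).isBigO_one ℝ
  have hleft := hf1.mul hg
  have hright := hg1.mul hf
  simp only [one_mul] at hleft hright
  exact (hleft.add hright).congr_left fun p => by ring

theorem of_mul_left (hgf : LocallyHolderAt α (g * f) x)
    (hg : ContDiffAt ℝ 1 g x) (hgx : g x ≠ 0) (hf : ContinuousAt f x) (hα : α ≤ 1) :
    LocallyHolderAt α f x := by
  refine ((locallyHolderAt_of_contDiffAt (hg.inv hgx) hα).mul hgf
    (hg.inv hgx).continuousAt (hg.continuousAt.mul hf)).congr_of_eventuallyEq ?_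
  filter_upwards [hg.continuousAt.eventually_ne hgx] with y hy
  exact inv_mul_cancel_left₀ hy (f y)

theorem comp (hf : LocallyHolderAt α f (σ x)) (hσ : ContDiffAt ℝ 1 σ x) (hα : 0 ≤ α) :
    LocallyHolderAt α (fun y => f (σ y)) x := by
  have hσσ : Tendsto (Prod.map σ σ) (𝓝 (x, x)) (𝓝 (σ x, σ x)) :=
    (hσ.continuousAt.prodMap hσ.continuousAt).tendsto
  have hlip := (hσ.hasStrictDerivAt one_ne_zero).hasStrictFDerivAt.isBigO_sub
  exact (hf.comp_tendsto hσσ).trans <|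
    hlip.abs_abs.rpow hα (.of_forall fun p => abs_nonneg (p.1 - p.2))

end LocallyHolderAt

theorem contDiffAt_iteratedDeriv {f : ℝ → ℝ} {x : ℝ} {n : WithTop ℕ∞} (k : ℕ)
    (hf : ContDiffAt ℝ (n + k) f x) : ContDiffAt ℝ n (iteratedDeriv k f) x := by
  induction k generalizing f with
  | zero => simpa using hf
  | succ k ih =>
    rw [iteratedDeriv_succ']
    exact ih (hf.derivWithin (by rw [Nat.cast_add_one, add_assoc]))

theorem locallyHolderAt_iteratedDeriv_of_weighted {a b α x : ℝ} {f : ℝ → ℝ} {k : ℕ}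
    (hf : ContDiffOn ℝ k f (Ioo a b)) (hx : x ∈ Ioo a b) (hα : α ≠ 0)
    (h : LocallyHolderAt α (fun x => (b - x) ^ k * iteratedDerivWithin k f (Ioo a b) x) x) :
    LocallyHolderAt (min α 1) (iteratedDeriv k f) x := by
  have hw : ContDiff ℝ 1 fun y => (b - y) ^ k := by fun_prop
  have hIoo := isOpen_Ioo.mem_nhds hx
  have hfx : ContinuousAt (iteratedDeriv k f) x :=
    (contDiffAt_iteratedDeriv (n := 0) k (by simpa using hf.contDiffAt hIoo)).continuousAt
  refine .of_mul_left ((h.mono hα (min_le_left α 1)).congr_of_eventuallyEq ?_) hw.contDiffAt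
    (pow_ne_zero k (sub_pos.2 hx.2).ne') hfx (min_le_right α 1)
  filter_upwards [hIoo] with y hy
  rw [iteratedDerivWithin_of_isOpen isOpen_Ioo hy, Pi.mul_apply]

theorem deriv_mul_comp_eventuallyEq {w f σ : ℝ → ℝ} {x : ℝ} (hw : ContDiffAt ℝ 1 w x)
    (hσ : ContDiffAt ℝ 1 σ x) (hf : ContDiffAt ℝ 1 f (σ x)) :
    deriv (fun y => w y * f (σ y)) =ᶠ[𝓝 x]
      fun y => deriv w y * f (σ y) + (w y * deriv σ y) * deriv f (σ y) := by
  filter_upwards [hw.eventually (by simp), hσ.eventually (by simp),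
    hσ.continuousAt.eventually (hf.eventually (by simp))] with y hwy hσy hfy
  have h := (hwy.differentiableAt one_ne_zero).hasDerivAt.mul
    ((hfy.differentiableAt one_ne_zero).hasDerivAt.comp y
      (hσy.differentiableAt one_ne_zero).hasDerivAt)
  exact (h.congr_deriv (by rw [Function.comp_apply]; ring)).deriv

theorem contDiffAt_iteratedDeriv_mul_comp_sub (k : ℕ) {w f σ : ℝ → ℝ} {x : ℝ}
    (hw : ContDiffAt ℝ (k + 1) w x) (hσ : ContDiffAt ℝ (k + 1) σ x) (hf : ContDiffAt ℝ k f (σ x)) :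
    ContDiffAt ℝ 1 (fun y => iteratedDeriv k (fun y => w y * f (σ y)) y -
      w y * deriv σ y ^ k * iteratedDeriv k f (σ y)) x := by
  induction k generalizing w f with
  | zero => simpa using contDiffAt_const
  | succ k ih =>
    rw [Nat.cast_add_one] at hw hσ hf
    have hk1 : (k + 1 : WithTop ℕ∞) ≤ k + 1 + 1 := le_self_add
    have h1k : (1 : WithTop ℕ∞) ≤ k + 1 := le_add_self
    have hwσ' : ContDiffAt ℝ (k + 1) (fun y => w y * deriv σ y) x :=
      (hw.of_le hk1).mul (hσ.derivWithin le_rfl)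
    have hf' : ContDiffAt ℝ k (deriv f) (σ x) := hf.derivWithin le_rfl
    have hw'f : ContDiffAt ℝ (k + 1) (fun y => deriv w y * f (σ y)) x :=
      (hw.derivWithin le_rfl).mul (hf.comp x (hσ.of_le hk1))
    have hwf' : ContDiffAt ℝ k (fun y => w y * deriv σ y * deriv f (σ y)) x :=
      (hwσ'.of_le le_self_add).mul (hf'.comp x (hσ.of_le (le_self_add.trans hk1)))
    have hiter : iteratedDeriv (k + 1) (fun y => w y * f (σ y)) =ᶠ[𝓝 x] fun y =>
        iteratedDeriv k (fun y => deriv w y * f (σ y)) y +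
          iteratedDeriv k (fun y => w y * deriv σ y * deriv f (σ y)) y := by
      rw [iteratedDeriv_succ']
      refine ((deriv_mul_comp_eventuallyEq (hw.of_le (h1k.trans hk1)) (hσ.of_le (h1k.trans hk1))
        (hf.of_le h1k)).iteratedDeriv k).trans ?_
      filter_upwards [hw'f.eventually (by simp), hwf'.eventually (by simp)] with y h₁ h₂
      exact iteratedDeriv_fun_add (h₁.of_le le_self_add) h₂
    have hlow : ContDiffAt ℝ 1 (iteratedDeriv k fun y => deriv w y * f (σ y)) x :=
      contDiffAt_iteratedDeriv k (by rwa [add_comm])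
    refine (hlow.add (ih hwσ' (hσ.of_le hk1) hf')).congr_of_eventuallyEq ?_
    filter_upwards [hiter] with y hy
    rw [hy, iteratedDeriv_succ']
    ring

theorem LocallyHolderAt.iteratedDeriv_mul_comp {α x : ℝ} {k : ℕ} {w f σ : ℝ → ℝ} (hα : 0 ≤ α)
    (hα1 : α ≤ 1) (hw : ContDiffAt ℝ (k + 1) w x) (hσ : ContDiffAt ℝ (k + 1) σ x)
    (hf : ContDiffAt ℝ k f (σ x)) (hfH : LocallyHolderAt α (iteratedDeriv k f) (σ x)) :
    LocallyHolderAt α (iteratedDeriv k fun y => w y * f (σ y)) x := by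
  have h1k : (1 : WithTop ℕ∞) ≤ k + 1 := le_add_self
  have hσ1 := hσ.of_le h1k
  have hlead : ContDiffAt ℝ 1 (fun y => w y * deriv σ y ^ k) x := by
    obtain rfl | hk := k.eq_zero_or_pos
    · simpa using hw
    · exact (hw.of_le h1k).mul (((hσ.derivWithin le_rfl).of_le (by exact_mod_cast hk)).pow k)
  have hD : ContinuousAt (fun y => iteratedDeriv k f (σ y)) x :=
    (contDiffAt_iteratedDeriv (n := 0) k (by rwa [zero_add])).continuousAt.comp hσ.continuousAt
  have h := (locallyHolderAt_of_contDiffAt (contDiffAt_iteratedDeriv_mul_comp_sub k hw hσ hf)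
    hα1).add ((locallyHolderAt_of_contDiffAt hlead hα1).mul (hfH.comp hσ1 hα)
      hlead.continuousAt hD)
  simpa only [sub_add_cancel] using h

/-- The Weyl kernel `x ↦ (-x)₊^i`. Convolving with it is the unnormalised Weyl fractional
integral of order `i + 1`. -/
noncomputable def weylKernel (i : ℝ) : ℝ → ℝ := indicator (Iio 0) fun x => (-x) ^ i

/-- The Weyl fractional integral `s ↦ ∫_s^∞ f(u) (u - s)^i du` of order `i + 1`, without the usual
normalising factor `1 / Γ(i + 1)`. -/
noncomputable def weylIntegral (i : ℝ) (f : ℝ → ℝ) (s : ℝ) : ℝ :=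
  ∫ u in Ioi s, f u * (u - s) ^ i

theorem contDiff_succ_of_hasDerivAt {m : ℕ} {f f' : ℝ → ℝ} (hd : ∀ x, HasDerivAt f (f' x) x)
    (hf' : ContDiff ℝ m f') : ContDiff ℝ (m + 1 : ℕ) f := by
  rw [Nat.cast_add_one, contDiff_succ_iff_deriv, funext fun x => (hd x).deriv]
  exact ⟨fun x => (hd x).differentiableAt, by simp, hf'⟩

theorem measurable_weylKernel (i : ℝ) : Measurable (weylKernel i) :=
  (measurable_neg.pow_const i).indicator measurableSet_Iio

theorem locallyIntegrable_weylKernel {i : ℝ} (hi : -1 < i) :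
    LocallyIntegrable (weylKernel i) := by
  refine locallyIntegrable_of_norm_le_rpow (C := 1) (α := -i) (by simp) (by simpa using by linarith)
    (.of_forall fun x => ?_) (measurable_weylKernel i).aestronglyMeasurable
  obtain hx | hx := lt_or_ge x 0
  · simp [weylKernel, hx, abs_of_neg hx, abs_of_nonneg (Real.rpow_nonneg (neg_nonneg.2 hx.le) i)]
  · simp only [weylKernel, indicator_of_notMem (notMem_Iio.2 hx), norm_zero]
    positivity

theorem mul_weylKernel (i : ℝ) (f : ℝ → ℝ) (s : ℝ) :
    (fun u => f u * weylKernel i (s - u)) = indicator (Ioi s) fun u => f u * (u - s) ^ i := by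
  ext u
  by_cases hu : s < u <;> simp [weylKernel, hu]

theorem weylIntegral_eq_convolution (i : ℝ) (f : ℝ → ℝ) :
    weylIntegral i f = convolution f (weylKernel i) (.mul ℝ ℝ) := by
  ext s
  simp only [weylIntegral, ← integral_indicator measurableSet_Ioi, ← mul_weylKernel,
    convolution, ContinuousLinearMap.mul_apply']

theorem weylIntegral_eq_integral_translate (i : ℝ) (f : ℝ → ℝ) (s : ℝ) :
    weylIntegral i f s = ∫ t in Ioi 0, f (s + t) * t ^ i := by
  have := (measurePreserving_add_left volume s).setIntegral_preimage_emb
    (measurableEmbedding_addLeft s) (fun u => f u * (u - s) ^ i) (Ioi s)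
  simpa [weylIntegral] using this.symm

section CompactSupport

variable {i : ℝ} {f g : ℝ → ℝ} {k : ℕ}

theorem integrableOn_mul_sub_rpow (hi : -1 < i) (hf : Continuous f) (hfc : HasCompactSupport f)
    (s : ℝ) : IntegrableOn (fun u => f u * (u - s) ^ i) (Ioi s) := by
  have h := hfc.convolutionExists_left (.mul ℝ ℝ) hf (locallyIntegrable_weylKernel hi) s
  simpa only [ConvolutionExistsAt, ContinuousLinearMap.mul_apply', mul_weylKernel,
    integrable_indicator_iff measurableSet_Ioi] using h

theorem weylIntegral_add (hi : -1 < i) (hf : Continuous f) (hfc : HasCompactSupport f)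
    (hg : Continuous g) (hgc : HasCompactSupport g) :
    weylIntegral i (f + g) = weylIntegral i f + weylIntegral i g := by
  ext s
  simp only [weylIntegral, Pi.add_apply, add_mul]
  exact integral_add (integrableOn_mul_sub_rpow hi hf hfc s) (integrableOn_mul_sub_rpow hi hg hgc s)

theorem contDiff_weylIntegral (hi : -1 < i) (hf : ContDiff ℝ k f) (hfc : HasCompactSupport f) :
    ContDiff ℝ k (weylIntegral i f) := by
  rw [weylIntegral_eq_convolution]
  exact hfc.contDiff_convolution_left (n := k) _ hf (locallyIntegrable_weylKernel hi)

theorem hasDerivAt_weylIntegral_of_contDiff (hi : -1 < i) (hf : ContDiff ℝ 1 f)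
    (hfc : HasCompactSupport f) (s : ℝ) :
    HasDerivAt (weylIntegral i f) (weylIntegral i (deriv f) s) s := by
  rw [weylIntegral_eq_convolution, weylIntegral_eq_convolution]
  exact hfc.hasDerivAt_convolution_left _ hf (locallyIntegrable_weylKernel hi) s

theorem weylIntegral_zero_deriv (hf : ContDiff ℝ 1 f) (hfc : HasCompactSupport f) :
    weylIntegral 0 (deriv f) = -f := by
  ext s
  simpa [weylIntegral] using hfc.integral_Ioi_deriv_eq hf s

/-- This lets integration by parts act on a merely continuous `f`. `F` is a cut-off primitive of
`f`, and `χ` collects the derivatives that fall on the cut-off. -/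
theorem exists_eq_deriv_add_of_hasCompactSupport (hf : Continuous f) (hfc : HasCompactSupport f) :
    ∃ F χ : ℝ → ℝ, ContDiff ℝ 1 F ∧ HasCompactSupport F ∧ ContDiff ℝ 1 χ ∧ HasCompactSupport χ ∧
      f = deriv F + χ := by
  obtain ⟨R, hR, hfR⟩ := hfc.isBounded.subset_closedBall_lt 0 0
  let θ : ContDiffBump (0 : ℝ) := ⟨R, R + 1, hR, by linarith⟩
  let P : ℝ → ℝ := fun x => ∫ t in (0 : ℝ)..x, f t
  have hP (x : ℝ) : HasDerivAt P (f x) x := hf.integral_hasStrictDerivAt 0 x |>.hasDerivAt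
  have hP1 : ContDiff ℝ 1 P := by
    refine contDiff_one_iff_deriv.2 ⟨fun x => (hP x).differentiableAt, ?_⟩
    rwa [funext fun x => (hP x).deriv]
  have hθf (x : ℝ) : θ x * f x = f x := by
    by_cases hx : x ∈ tsupport f
    · rw [θ.one_of_mem_closedBall (hfR hx), one_mul]
    · rw [image_eq_zero_of_notMem_tsupport hx, mul_zero]
  refine ⟨θ * P, -(deriv θ * P), θ.contDiff.mul hP1, θ.hasCompactSupport.mul_right, ?_,
    θ.hasCompactSupport.deriv.mul_right.neg, ?_⟩
  · exact ((θ.contDiff (n := 2)).deriv' |>.mul hP1).neg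
  · ext x
    have h := ((θ.contDiffAt (n := 1)).differentiableAt one_ne_zero).hasDerivAt.mul (hP x)
    simp only [Pi.add_apply, Pi.neg_apply, Pi.mul_apply, h.deriv, hθf]
    ring

theorem tendsto_atTop_zero_of_hasCompactSupport (hfc : HasCompactSupport f) :
    Tendsto f atTop (𝓝 0) :=
  (hasCompactSupport_iff_eventuallyEq.1 hfc).tendsto.mono_left
    (coclosedCompact_eq_cocompact (X := ℝ) ▸ atTop_le_cocompact)

theorem weylIntegral_deriv (hi : 0 < i) (hf : ContDiff ℝ 1 f) (hfc : HasCompactSupport f) :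
    weylIntegral i (deriv f) = -i • weylIntegral (i - 1) f := by
  ext s
  have hpow (u : ℝ) (hu : u ∈ Ioi s) :
      HasDerivAt (fun u => (u - s) ^ i) (i * (u - s) ^ (i - 1)) u := by
    simpa using ((hasDerivAt_id u).sub_const s).rpow_const (Or.inl (sub_pos.2 hu).ne')
  have hint' : IntegrableOn (fun u => deriv f u * (u - s) ^ i) (Ioi s) :=
    integrableOn_mul_sub_rpow (by linarith) (hf.continuous_deriv le_rfl) hfc.deriv s
  have hint : IntegrableOn (fun u => f u * (i * (u - s) ^ (i - 1))) (Ioi s) := by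
    have h := (integrableOn_mul_sub_rpow (i := i - 1) (by linarith) hf.continuous hfc s).const_mul i
    simpa only [IntegrableOn, mul_left_comm] using h
  have hcont : Continuous fun u => f u * (u - s) ^ i :=
    hf.continuous.mul ((continuous_id.sub continuous_const).rpow_const fun _ => Or.inr hi.le)
  have hs : Tendsto (fun u => f u * (u - s) ^ i) (𝓝[>] s) (𝓝 0) := by
    simpa [Real.zero_rpow hi.ne'] using (hcont.tendsto s).mono_left nhdsWithin_le_nhds
  have htop : Tendsto (fun u => f u * (u - s) ^ i) atTop (𝓝 0) :=
    tendsto_atTop_zero_of_hasCompactSupport hfc.mul_right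
  have h := integral_Ioi_mul_deriv_eq_deriv_mul
    (fun u _ => (hf.differentiable one_ne_zero u).hasDerivAt) hpow hint hint' hs htop
  simp only [weylIntegral, Pi.smul_apply, smul_eq_mul, ← integral_const_mul]
  rw [sub_zero, zero_sub, eq_comm, neg_eq_iff_eq_neg, ← integral_neg] at h
  simpa only [mul_left_comm (f _), neg_mul] using h

theorem hasDerivAt_weylIntegral_zero (hf : Continuous f) (hfc : HasCompactSupport f) (s : ℝ) :
    HasDerivAt (weylIntegral 0 f) (-f s) s := by
  obtain ⟨F, χ, hF, hFc, hχ, hχc, rfl⟩ := exists_eq_deriv_add_of_hasCompactSupport hf hfc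
  have hF' := hF.continuous_deriv le_rfl
  rw [weylIntegral_add (by norm_num) hF' hFc.deriv hχ.continuous hχc,
    weylIntegral_zero_deriv hF hFc]
  have hχd := hasDerivAt_weylIntegral_of_contDiff (i := 0) (by norm_num) hχ hχc s
  rw [weylIntegral_zero_deriv hχ hχc] at hχd
  exact ((hF.differentiable one_ne_zero s).hasDerivAt.neg.add hχd).congr_deriv (neg_add _ _).symm

theorem hasDerivAt_weylIntegral (hi : 0 < i) (hf : Continuous f) (hfc : HasCompactSupport f)
    (s : ℝ) : HasDerivAt (weylIntegral i f) (-i * weylIntegral (i - 1) f s) s := by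
  obtain ⟨F, χ, hF, hFc, hχ, hχc, rfl⟩ := exists_eq_deriv_add_of_hasCompactSupport hf hfc
  have hF' := hF.continuous_deriv le_rfl
  have hi' : -1 < i - 1 := by linarith
  rw [weylIntegral_add (by linarith) hF' hFc.deriv hχ.continuous hχc,
    weylIntegral_add hi' hF' hFc.deriv hχ.continuous hχc, weylIntegral_deriv hi hF hFc]
  have hχd := hasDerivAt_weylIntegral_of_contDiff (by linarith : -1 < i) hχ hχc s
  rw [weylIntegral_deriv hi hχ hχc] at hχd
  simpa [mul_add] using
    ((hasDerivAt_weylIntegral_of_contDiff hi' hF hFc s).const_smul (-i)).add hχd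

theorem contDiff_succ_weylIntegral {m : ℕ} (hi : 0 < i) (hf : Continuous f)
    (hfc : HasCompactSupport f) (h : ContDiff ℝ m (weylIntegral (i - 1) f)) :
    ContDiff ℝ (m + 1 : ℕ) (weylIntegral i f) :=
  contDiff_succ_of_hasDerivAt (hasDerivAt_weylIntegral hi hf hfc) (contDiff_const.mul h)

theorem contDiff_add_weylIntegral (n : ℕ) (hi : -1 < i) (hn : n ≤ i + 1) (hf : ContDiff ℝ k f)
    (hfc : HasCompactSupport f) : ContDiff ℝ (n + k : ℕ) (weylIntegral i f) := by
  induction n generalizing i with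
  | zero => simpa using contDiff_weylIntegral hi hf hfc
  | succ n ih =>
    rw [Nat.cast_add_one] at hn
    obtain hi0 | hi0 := (show 0 ≤ i by linarith [n.cast_nonneg (α := ℝ)]).eq_or_lt
    · obtain rfl : n = 0 := by exact_mod_cast (show (n : ℝ) ≤ 0 by linarith).antisymm n.cast_nonneg
      rw [zero_add, add_comm, ← hi0]
      exact contDiff_succ_of_hasDerivAt (hasDerivAt_weylIntegral_zero hf.continuous hfc) hf.neg
    · rw [add_right_comm]
      exact contDiff_succ_weylIntegral hi0 hf.continuous hfc (ih (by linarith) (by linarith))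

end CompactSupport

/-- The unnormalised Marchaud fractional derivative of order `-i` of `f`, for `-1 < i < 0`. It
extends the order-lowering formula for `weylIntegral` to negative `i`, at the price of regularising
the integral by the subtraction of `f s`. -/
noncomputable def marchaudIntegral (i : ℝ) (f : ℝ → ℝ) (s : ℝ) : ℝ :=
  ∫ t in Ioi 0, (f (s + t) - f s) * t ^ (i - 1)

section Marchaud

variable {i α : ℝ} {f : ℝ → ℝ} {k : ℕ} {s₀ : ℝ}

theorem aestronglyMeasurable_marchaud (hf : Continuous f) (s : ℝ) :
    AEStronglyMeasurable (fun t => (f (s + t) - f s) * t ^ (i - 1)) (volume.restrict (Ioi 0)) := by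
  have := hf.measurable
  exact Measurable.aestronglyMeasurable (by fun_prop)

theorem exists_integrableOn_bound_marchaud {M : ℝ} (hM : ∀ x, ‖f x‖ ≤ M) (hi : i < 0)
    (hαi : 0 < α + i) (hf : LocallyHolderAt α f s₀) :
    ∃ δ > 0, ∃ B : ℝ → ℝ, IntegrableOn B (Ioi 0) ∧ ∀ s ∈ Metric.ball s₀ δ, ∀ t ∈ Ioi (0 : ℝ),
      ‖(f (s + t) - f s) * t ^ (i - 1)‖ ≤ B t := by
  obtain ⟨C, hC⟩ := hf.bound
  obtain ⟨ε, hε, hεC⟩ := Metric.eventually_nhds_iff_ball.1 hC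
  refine ⟨ε / 2, half_pos hε, (Iio (ε / 2)).piecewise (fun t => C * t ^ (α + i - 1))
    (fun t => 2 * M * t ^ (i - 1)), .piecewise measurableSet_Iio ?_ ?_, fun s hs t ht => ?_⟩
  · rw [IntegrableOn, Measure.restrict_restrict measurableSet_Iio, Iio_inter_Ioi]
    exact ((intervalIntegral.integrableOn_Ioo_rpow_iff (half_pos hε)).2 (by linarith)).const_mul C
  · rw [compl_Iio]
    refine IntegrableOn.mono_measure ?_ Measure.restrict_le_self
    exact (integrableOn_Ici_iff_integrableOn_Ioi enorm_ne_top).2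
      ((integrableOn_Ioi_rpow_of_lt (by linarith) (half_pos hε)).const_mul (2 * M))
  · have hpow (r : ℝ) : 0 ≤ t ^ r := Real.rpow_nonneg (mem_Ioi.1 ht).le r
    rw [norm_mul, Real.norm_of_nonneg (hpow _)]
    obtain htε | htε := lt_or_ge t (ε / 2)
    · have hmem : (s + t, s) ∈ Metric.ball (s₀, s₀) ε := by
        rw [Metric.mem_ball, Real.dist_eq, abs_lt] at hs
        rw [mem_Ioi] at ht
        simp only [Metric.mem_ball, Prod.dist_eq, Real.dist_eq, sup_lt_iff, abs_lt]
        constructor <;> constructor <;> linarith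
      have hst := hεC _ hmem
      rw [piecewise_eq_of_mem _ _ _ (mem_Iio.2 htε), add_sub_assoc, Real.rpow_add ht, ← mul_assoc]
      refine mul_le_mul_of_nonneg_right ?_ (hpow _)
      simpa [abs_of_pos (mem_Ioi.1 ht), abs_of_nonneg (hpow α)] using hst
    · rw [piecewise_eq_of_notMem _ _ _ (notMem_Iio.2 htε), two_mul]
      exact mul_le_mul_of_nonneg_right
        ((norm_sub_le _ _).trans (add_le_add (hM _) (hM _))) (hpow _)

theorem continuousAt_marchaudIntegral (hfc : Continuous f) (hfs : HasCompactSupport f) (hi : i < 0)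
    (hαi : 0 < α + i) (hf : LocallyHolderAt α f s₀) : ContinuousAt (marchaudIntegral i f) s₀ := by
  obtain ⟨M, hM⟩ := hfs.exists_bound_of_continuous hfc
  obtain ⟨δ, hδ, B, hB, hbound⟩ := exists_integrableOn_bound_marchaud hM hi hαi hf
  refine continuousAt_of_dominated (.of_forall fun s => aestronglyMeasurable_marchaud hfc s)
    ?_ hB (.of_forall fun t => by fun_prop)
  filter_upwards [Metric.ball_mem_nhds s₀ hδ] with s hs
  exact ae_restrict_of_forall_mem measurableSet_Ioi (hbound s hs)

theorem integrableOn_marchaud (hfc : Continuous f) (hfs : HasCompactSupport f) (hi : i < 0)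
    (hαi : 0 < α + i) (hf : LocallyHolderAt α f s₀) :
    IntegrableOn (fun t => (f (s₀ + t) - f s₀) * t ^ (i - 1)) (Ioi 0) := by
  obtain ⟨M, hM⟩ := hfs.exists_bound_of_continuous hfc
  obtain ⟨δ, hδ, B, hB, hbound⟩ := exists_integrableOn_bound_marchaud hM hi hαi hf
  exact hB.mono' (aestronglyMeasurable_marchaud hfc s₀)
    (ae_restrict_of_forall_mem measurableSet_Ioi (hbound s₀ (Metric.mem_ball_self hδ)))

theorem hasDerivAt_marchaudIntegral (hf : ContDiff ℝ 1 f) (hfs : HasCompactSupport f) (hi : -1 < i)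
    (hi0 : i < 0) (hαi : 0 < α + i) (hf' : LocallyHolderAt α (deriv f) s₀) :
    HasDerivAt (marchaudIntegral i f) (marchaudIntegral i (deriv f) s₀) s₀ := by
  have hfc' := hf.continuous_deriv le_rfl
  have hd (x : ℝ) : HasDerivAt f (deriv f x) x := (hf.differentiable one_ne_zero x).hasDerivAt
  obtain ⟨M, hM⟩ := hfs.deriv.exists_bound_of_continuous hfc'
  obtain ⟨δ, hδ, B, hB, hbound⟩ := exists_integrableOn_bound_marchaud hM hi0 hαi hf'
  refine (hasDerivAt_integral_of_dominated_loc_of_deriv_le (Metric.ball_mem_nhds s₀ hδ)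
    (.of_forall fun s => aestronglyMeasurable_marchaud hf.continuous s)
    (integrableOn_marchaud hf.continuous hfs hi0 (by linarith)
      (locallyHolderAt_of_contDiffAt hf.contDiffAt le_rfl))
    (aestronglyMeasurable_marchaud hfc' s₀)
    (ae_restrict_of_forall_mem measurableSet_Ioi fun t ht s hs => hbound s hs t ht) hB
    (.of_forall fun t s _ => ?_)).2
  exact (((hd (s + t)).comp_add_const s t).sub (hd s)).mul_const _

theorem tendsto_sub_mul_rpow_nhdsGT_zero {f' s : ℝ} (hi : -1 < i) (hf : HasDerivAt f f' s) :
    Tendsto (fun t => (f (s + t) - f s) * t ^ i) (𝓝[>] 0) (𝓝 0) := by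
  have hO : (fun t => f (s + t) - f s) =O[𝓝 0] fun t => t := by
    rw [← add_zero s] at hf
    simpa using (hf.comp_const_add s 0).isBigO_sub
  refine ((hO.mono nhdsWithin_le_nhds).mul (isBigO_refl (· ^ i) _)).trans_tendsto ?_
  have h := (Real.continuousAt_rpow_const 0 (1 + i) (.inr (by linarith))).tendsto
  rw [Real.zero_rpow (by linarith)] at h
  refine (h.mono_left nhdsWithin_le_nhds).congr' ?_
  filter_upwards [self_mem_nhdsWithin] with t ht
  rw [Real.rpow_add ht, Real.rpow_one]

theorem weylIntegral_deriv_eq_marchaudIntegral (hf : ContDiff ℝ 1 f) (hfs : HasCompactSupport f)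
    (hi : -1 < i) (hi0 : i < 0) : weylIntegral i (deriv f) = -i • marchaudIntegral i f := by
  ext s
  have hd (x : ℝ) : HasDerivAt f (deriv f x) x := (hf.differentiable one_ne_zero x).hasDerivAt
  have hv (t : ℝ) (_ : t ∈ Ioi (0 : ℝ)) :
      HasDerivAt (fun t => f (s + t) - f s) (deriv f (s + t)) t :=
    ((hd (s + t)).comp_const_add s t).sub_const _
  have hpow (t : ℝ) (ht : t ∈ Ioi (0 : ℝ)) : HasDerivAt (fun t => t ^ i) (i * t ^ (i - 1)) t :=
    Real.hasDerivAt_rpow_const (.inl (mem_Ioi.1 ht).ne')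
  have hint : IntegrableOn (fun t => (f (s + t) - f s) * (i * t ^ (i - 1))) (Ioi 0) := by
    have h := (integrableOn_marchaud hf.continuous hfs hi0 (by linarith)
      (locallyHolderAt_of_contDiffAt (hf.contDiffAt (x := s)) le_rfl)).const_mul i
    simpa only [IntegrableOn, mul_left_comm] using h
  have hint' : IntegrableOn (fun t => deriv f (s + t) * t ^ i) (Ioi 0) := by
    have h := (measurePreserving_add_left volume s).integrableOn_comp_preimage
      (measurableEmbedding_addLeft s) |>.2
      (integrableOn_mul_sub_rpow hi (hf.continuous_deriv le_rfl) hfs.deriv s)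
    simpa [Function.comp_def] using h
  have hzero := tendsto_sub_mul_rpow_nhdsGT_zero hi (hd s)
  have htop : Tendsto (fun t => (f (s + t) - f s) * t ^ i) atTop (𝓝 0) := by
    have h := ((tendsto_atTop_zero_of_hasCompactSupport hfs).comp
      (tendsto_atTop_add_const_left atTop s tendsto_id)).sub_const (f s)
    simpa using h.mul (tendsto_rpow_neg_atTop (neg_pos.2 hi0))
  have h := integral_Ioi_mul_deriv_eq_deriv_mul hv hpow hint hint' hzero htop
  rw [sub_zero, zero_sub, eq_comm, neg_eq_iff_eq_neg, ← integral_neg] at h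
  simpa only [weylIntegral_eq_integral_translate, marchaudIntegral, Pi.smul_apply, smul_eq_mul,
    ← integral_const_mul, mul_left_comm (f _ - _), neg_mul] using h

theorem contDiff_one_weylIntegral (hi0 : i < 0) (hα1 : α ≤ 1) (hαi : 0 < α + i)
    (hf : Continuous f) (hfc : HasCompactSupport f) (hfH : ∀ x, LocallyHolderAt α f x) :
    ContDiff ℝ 1 (weylIntegral i f) := by
  have hi : -1 < i := by linarith
  obtain ⟨F, χ, hF, hFc, hχ, hχc, rfl⟩ := exists_eq_deriv_add_of_hasCompactSupport hf hfc
  have hF' := hF.continuous_deriv le_rfl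
  have hFH (x : ℝ) : LocallyHolderAt α (deriv F) x := by
    have h := (hfH x).add (locallyHolderAt_of_contDiffAt hχ.neg.contDiffAt hα1)
    simpa using h
  rw [weylIntegral_add hi hF' hFc.deriv hχ.continuous hχc,
    weylIntegral_deriv_eq_marchaudIntegral hF hFc hi hi0]
  refine ContDiff.add (contDiff_const.smul ?_) (contDiff_weylIntegral (k := 1) hi hχ hχc)
  refine contDiff_succ_of_hasDerivAt (m := 0)
    (fun s => hasDerivAt_marchaudIntegral hF hFc hi hi0 hαi (hFH s)) ?_
  exact contDiff_zero.2 <| continuous_iff_continuousAt.2 fun s =>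
    continuousAt_marchaudIntegral hF' hFc.deriv hi0 hαi (hFH s)

theorem contDiff_succ_weylIntegral_of_neg (hi0 : i < 0) (hα1 : α ≤ 1) (hαi : 0 < α + i)
    (hf : ContDiff ℝ k f) (hfc : HasCompactSupport f)
    (hfH : ∀ x, LocallyHolderAt α (iteratedDeriv k f) x) :
    ContDiff ℝ (k + 1 : ℕ) (weylIntegral i f) := by
  induction k generalizing f with
  | zero =>
    simpa using contDiff_one_weylIntegral hi0 hα1 hαi hf.continuous hfc (by simpa using hfH)
  | succ k ih =>
    have hf1 : ContDiff ℝ 1 f := hf.of_le (by exact_mod_cast Nat.le_add_left 1 k)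
    rw [Nat.cast_add_one] at hf
    exact contDiff_succ_of_hasDerivAt
      (hasDerivAt_weylIntegral_of_contDiff (by linarith) hf1 hfc)
      (ih hf.deriv' hfc.deriv (by simpa only [iteratedDeriv_succ'] using hfH))

theorem contDiff_add_succ_weylIntegral (n : ℕ) (hin : i < n) (hα1 : α ≤ 1) (hαi : n < α + i)
    (hf : ContDiff ℝ k f) (hfc : HasCompactSupport f)
    (hfH : ∀ x, LocallyHolderAt α (iteratedDeriv k f) x) :
    ContDiff ℝ (n + k + 1 : ℕ) (weylIntegral i f) := by
  induction n generalizing i with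
  | zero =>
    rw [Nat.cast_zero] at hin hαi
    simpa using contDiff_succ_weylIntegral_of_neg hin hα1 hαi hf hfc hfH
  | succ n ih =>
    rw [Nat.cast_add_one] at hin hαi
    rw [add_right_comm n]
    exact contDiff_succ_weylIntegral (by linarith [n.cast_nonneg (α := ℝ)]) hf.continuous hfc
      (ih (by linarith) (by linarith))

end Marchaud

section Localization

variable {i s₀ : ℝ} {f g : ℝ → ℝ} {k : ℕ}

theorem contDiff_mul_weylKernel {n : WithTop ℕ∞} {θ : ℝ → ℝ} (i : ℝ) (hθ : ContDiff ℝ n θ)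
    (hθ0 : θ =ᶠ[𝓝 0] 0) : ContDiff ℝ n (θ * weylKernel i) := by
  refine contDiff_iff_contDiffAt.2 fun x => ?_
  obtain hx | rfl | hx := lt_trichotomy x 0
  · have hpow : ContDiffAt ℝ n (fun x => (-x) ^ i) x :=
      contDiffAt_id.neg.rpow_const_of_ne (neg_pos.2 hx).ne'
    refine (hθ.contDiffAt.mul hpow).congr_of_eventuallyEq ?_
    filter_upwards [Iio_mem_nhds hx] with y hy
    simp [weylKernel, mem_Iio.1 hy]
  · refine (contDiffAt_const (c := 0)).congr_of_eventuallyEq ?_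
    filter_upwards [hθ0] with y hy
    simp [hy]
  · refine (contDiffAt_const (c := 0)).congr_of_eventuallyEq ?_
    filter_upwards [Ioi_mem_nhds hx] with y hy
    simp [weylKernel, (mem_Ioi.1 hy).le]

theorem exists_contDiff_eq_weylKernel (i : ℝ) {r R : ℝ} (hr : 0 < r) (hR : 0 < R) :
    ∃ K : ℝ → ℝ, ContDiff ℝ ∞ K ∧ HasCompactSupport K ∧
      ∀ x, r ≤ |x| → |x| ≤ R → K x = weylKernel i x := by
  let θ : ContDiffBump (0 : ℝ) := ⟨r / 2, r, half_pos hr, half_lt_self hr⟩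
  let Θ : ContDiffBump (0 : ℝ) := ⟨R, R + 1, hR, lt_add_one R⟩
  refine ⟨(Θ - θ) * weylKernel i, contDiff_mul_weylKernel i (Θ.contDiff.sub θ.contDiff) ?_,
    (Θ.hasCompactSupport.sub θ.hasCompactSupport).mul_right, fun x hrx hxR => ?_⟩
  · filter_upwards [Θ.eventuallyEq_one, θ.eventuallyEq_one] with x h₁ h₂
    simp [h₁, h₂]
  · have h₁ : Θ x = 1 := Θ.one_of_mem_closedBall (by simpa using hxR)
    have h₂ : θ x = 0 := θ.zero_of_le_dist (by simpa using hrx)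
    simp [h₁, h₂]

theorem exists_contDiff_mul_weylKernel_eq (i : ℝ) (hfc : HasCompactSupport f)
    (hf : f =ᶠ[𝓝 s₀] 0) :
    ∃ K : ℝ → ℝ, ContDiff ℝ ∞ K ∧ HasCompactSupport K ∧
      ∀ᶠ s in 𝓝 s₀, ∀ u, f u * weylKernel i (s - u) = f u * K (s - u) := by
  obtain ⟨ε, hε, hεf⟩ := Metric.eventually_nhds_iff_ball.1 hf
  obtain ⟨R, hR, hRf⟩ := hfc.isBounded.subset_closedBall_lt 0 s₀
  obtain ⟨K, hK, hKc, hKW⟩ :=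
    exists_contDiff_eq_weylKernel i (half_pos hε) (add_pos hR (half_pos hε))
  refine ⟨K, hK, hKc, ?_⟩
  filter_upwards [Metric.ball_mem_nhds s₀ (half_pos hε)] with s hs u
  by_cases hu : f u = 0
  · simp [hu]
  · have hnear : ε ≤ |u - s₀| := not_lt.1 fun h => hu (hεf u h)
    have hfar : |u - s₀| ≤ R := hRf (subset_tsupport f hu)
    rw [Metric.mem_ball, Real.dist_eq] at hs
    have h₁ := abs_sub_le u s s₀
    have h₂ := abs_sub_le s s₀ u
    rw [abs_sub_comm u s] at h₁
    rw [abs_sub_comm s₀ u] at h₂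
    rw [hKW (s - u) (by linarith) (by linarith)]

theorem contDiffAt_weylIntegral_of_eventuallyEq {n : ℕ} (hi : -1 < i) (hf : Continuous f)
    (hfc : HasCompactSupport f) (hg : LocallyIntegrable g) (hgc : HasCompactSupport g)
    (hfg : f =ᶠ[𝓝 s₀] g) (h : ContDiffAt ℝ n (weylIntegral i f) s₀) :
    ContDiffAt ℝ n (weylIntegral i g) s₀ := by
  obtain ⟨K, hK, hKc, hKW⟩ := exists_contDiff_mul_weylKernel_eq i (hgc.sub hfc)
    (hfg.mono fun u hu => sub_eq_zero.2 hu.symm)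
  have hgf : LocallyIntegrable (g - f) := hg.sub hf.locallyIntegrable
  have hsmooth : ContDiff ℝ n (convolution (g - f) K (.mul ℝ ℝ)) :=
    hKc.contDiff_convolution_right _ hgf (hK.of_le (by exact_mod_cast le_top))
  refine (h.add hsmooth.contDiffAt).congr_of_eventuallyEq ?_
  filter_upwards [hKW] with s hs
  have hintf := hfc.convolutionExists_left (.mul ℝ ℝ) hf (locallyIntegrable_weylKernel hi) s
  have hintgf := hKc.convolutionExists_right (.mul ℝ ℝ) hgf hK.continuous s
  rw [weylIntegral_eq_convolution, weylIntegral_eq_convolution, convolution,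
    convolution, convolution, ← integral_add hintf hintgf]
  congr 1 with u
  rw [ContinuousLinearMap.mul_apply', ContinuousLinearMap.mul_apply',
    ContinuousLinearMap.mul_apply', ← hs u, ← add_mul, Pi.sub_apply, add_sub_cancel]

theorem exists_contDiffBump_tsupport {p : ℝ → Prop} (hp : ∀ᶠ x in 𝓝 s₀, p x) :
    ∃ χ : ContDiffBump s₀, ∀ x ∈ tsupport χ, p x := by
  obtain ⟨ε, hε, hεp⟩ := Metric.nhds_basis_closedBall.eventually_iff.1 hp
  exact ⟨⟨ε / 2, ε, half_pos hε, half_lt_self hε⟩,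
    fun x hx => hεp (by rwa [ContDiffBump.tsupport_eq] at hx)⟩

theorem contDiff_contDiffBump_mul {χ : ContDiffBump s₀}
    (hg : ∀ x ∈ tsupport χ, ContDiffAt ℝ k g x) : ContDiff ℝ k (⇑χ * g) :=
  (contMDiff_of_tsupport fun x hx =>
    (χ.contDiffAt.mul (hg x (closure_mono (Function.support_mul_subset_left _ _) hx))).contMDiffAt
    ).contDiff

theorem contDiffBump_mul_eventuallyEq (χ : ContDiffBump s₀) (g : ℝ → ℝ) : ⇑χ * g =ᶠ[𝓝 s₀] g := by
  filter_upwards [χ.eventuallyEq_one] with x hx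
  simp [hx]

theorem contDiffAt_add_weylIntegral (n : ℕ) (hi : -1 < i) (hn : n ≤ i + 1)
    (hg : LocallyIntegrable g) (hgc : HasCompactSupport g) (hgk : ContDiffAt ℝ k g s₀) :
    ContDiffAt ℝ (n + k : ℕ) (weylIntegral i g) s₀ := by
  obtain ⟨χ, hχ⟩ := exists_contDiffBump_tsupport (hgk.eventually (by simp))
  have hχg := contDiff_contDiffBump_mul hχ
  exact contDiffAt_weylIntegral_of_eventuallyEq hi hχg.continuous χ.hasCompactSupport.mul_right
    hg hgc (contDiffBump_mul_eventuallyEq χ g)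
    (contDiff_add_weylIntegral n hi hn hχg χ.hasCompactSupport.mul_right).contDiffAt

theorem locallyHolderAt_iteratedDeriv_contDiffBump_mul {α x : ℝ} {χ : ContDiffBump s₀}
    (hα : 0 ≤ α) (hα1 : α ≤ 1) (hg : ∀ x ∈ tsupport χ, ContDiffAt ℝ k g x)
    (hgH : ∀ x ∈ tsupport χ, LocallyHolderAt α (iteratedDeriv k g) x) :
    LocallyHolderAt α (iteratedDeriv k (⇑χ * g)) x := by
  by_cases hx : x ∈ tsupport χ
  · exact LocallyHolderAt.iteratedDeriv_mul_comp (σ := id) hα hα1 χ.contDiffAt contDiffAt_id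
      (hg x hx) (hgH x hx)
  · have hzero : (⇑χ * g : ℝ → ℝ) =ᶠ[𝓝 x] fun _ => 0 := by
      filter_upwards [notMem_tsupport_iff_eventuallyEq.1 hx] with y hy
      simp [hy]
    have hconst := locallyHolderAt_of_contDiffAt (x := x) (f := fun _ => 0) contDiffAt_const hα1
    refine hconst.congr_of_eventuallyEq ((hzero.iteratedDeriv k).trans ?_).symm
    exact .of_forall fun y => iteratedDeriv_fun_const_zero

theorem contDiffAt_add_succ_weylIntegral {α : ℝ} (n : ℕ) (hin : i < n) (hα1 : α ≤ 1)
    (hαi : n < α + i) (hg : LocallyIntegrable g) (hgc : HasCompactSupport g)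
    (hgk : ContDiffAt ℝ k g s₀) (hgH : LocallyHolderAt α (iteratedDeriv k g) s₀) :
    ContDiffAt ℝ (n + k + 1 : ℕ) (weylIntegral i g) s₀ := by
  obtain ⟨χ, hχ⟩ := exists_contDiffBump_tsupport ((hgk.eventually (by simp)).and hgH.eventually)
  have hχg := contDiff_contDiffBump_mul fun x hx => (hχ x hx).1
  have hχH (x : ℝ) : LocallyHolderAt α (iteratedDeriv k (⇑χ * g)) x :=
    locallyHolderAt_iteratedDeriv_contDiffBump_mul (by linarith) hα1
      (fun x hx => (hχ x hx).1) fun x hx => (hχ x hx).2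
  exact contDiffAt_weylIntegral_of_eventuallyEq (by linarith [n.cast_nonneg (α := ℝ)])
    hχg.continuous χ.hasCompactSupport.mul_right hg hgc (contDiffBump_mul_eventuallyEq χ g)
    (contDiff_add_succ_weylIntegral n hin hα1 hαi hχg χ.hasCompactSupport.mul_right
      hχH).contDiffAt

end Localization

section Growth

variable {a b c p ε : ℝ} {f f' : ℝ → ℝ} {k : ℕ}

theorem tendsto_sub_nhdsLT (b : ℝ) : Tendsto (fun x => b - x) (𝓝[<] b) (𝓝[>] 0) :=
  tendsto_nhdsWithin_iff.2 ⟨(Continuous.tendsto' (by fun_prop) _ _ (sub_self b)).mono_left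
    nhdsWithin_le_nhds, eventually_mem_nhdsWithin.mono fun _ hx => sub_pos.2 (mem_Iio.1 hx)⟩

theorem isBigO_sub_rpow_of_le {q : ℝ} (b : ℝ) (hpq : p ≤ q) :
    (fun x => (b - x) ^ q) =O[𝓝[<] b] fun x => (b - x) ^ p := by
  suffices h : (fun t : ℝ => t ^ q) =O[𝓝[>] 0] fun t => t ^ p from
    h.comp_tendsto (tendsto_sub_nhdsLT b)
  refine IsBigO.of_bound' ?_
  filter_upwards [Ioo_mem_nhdsGT one_pos] with t ht
  rw [Real.norm_of_nonneg (Real.rpow_nonneg ht.1.le _),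
    Real.norm_of_nonneg (Real.rpow_nonneg ht.1.le _)]
  exact Real.rpow_le_rpow_of_exponent_ge ht.1 ht.2.le hpq

theorem hasDerivAt_sub_rpow (C : ℝ) {x : ℝ} (hp : p ≠ 0) (hx : x < b) :
    HasDerivAt (fun x => C / (-p) * (b - x) ^ p) (C * (b - x) ^ (p - 1)) x := by
  have h := (((hasDerivAt_id x).const_sub b).rpow_const (p := p)
    (Or.inl (sub_pos.2 hx).ne')).const_mul (C / (-p))
  exact h.congr_deriv (by rw [id]; field_simp)

theorem norm_le_add_rpow_of_norm_deriv_le {C x₀ x : ℝ} (hC : 0 ≤ C) (hp : p < 0)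
    (hf : ∀ y ∈ Ico x₀ b, HasDerivAt f (f' y) y)
    (hf' : ∀ y ∈ Ico x₀ b, ‖f' y‖ ≤ C * (b - y) ^ (p - 1)) (hx : x ∈ Ico x₀ b) :
    ‖f x‖ ≤ ‖f x₀‖ + C / (-p) * (b - x) ^ p := by
  have hsub : Icc x₀ x ⊆ Ico x₀ b := Icc_subset_Ico_right hx.2
  have hB (y : ℝ) (hy : y ∈ Icc x₀ x) : HasDerivAt
      (fun y => ‖f x₀‖ + C / (-p) * (b - y) ^ p) (C * (b - y) ^ (p - 1)) y :=
    (hasDerivAt_sub_rpow C hp.ne (hsub hy).2).const_add _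
  have hnonneg : 0 ≤ C / (-p) * (b - x₀) ^ p :=
    mul_nonneg (div_nonneg hC (neg_pos.2 hp).le)
      (Real.rpow_nonneg (sub_pos.2 (hx.1.trans_lt hx.2)).le p)
  exact image_norm_le_of_norm_deriv_right_le_deriv_boundary'
    (B := fun y => ‖f x₀‖ + C / (-p) * (b - y) ^ p)
    (fun y hy => (hf y (hsub hy)).continuousAt.continuousWithinAt)
    (fun y hy => (hf y (hsub (Ico_subset_Icc_self hy))).hasDerivWithinAt)
    (le_add_of_nonneg_right hnonneg)
    (fun y hy => (hB y hy).continuousAt.continuousWithinAt)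
    (fun y hy => (hB y (Ico_subset_Icc_self hy)).hasDerivWithinAt)
    (fun y hy => hf' y (hsub (Ico_subset_Icc_self hy))) (right_mem_Icc.2 hx.1)

theorem isBigO_rpow_of_hasDerivAt (hp : p < 0) (hf : ∀ᶠ x in 𝓝[<] b, HasDerivAt f (f' x) x)
    (h : f' =O[𝓝[<] b] fun x => (b - x) ^ (p - 1)) : f =O[𝓝[<] b] fun x => (b - x) ^ p := by
  obtain ⟨C, hC, hCf'⟩ := h.exists_nonneg
  obtain ⟨l, hlb, hl⟩ := mem_nhdsLT_iff_exists_Ioo_subset.1 (hf.and hCf'.bound)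
  obtain ⟨x₀, hlx, hxb⟩ := exists_between (mem_Iio.1 hlb)
  have hsub (y : ℝ) (hy : y ∈ Ico x₀ b) : y ∈ Ioo l b := ⟨hlx.trans_le hy.1, hy.2⟩
  have hbound : f =O[𝓝[<] b] fun x => ‖f x₀‖ + C / (-p) * (b - x) ^ p := by
    refine IsBigO.of_bound' ?_
    filter_upwards [Ioo_mem_nhdsLT hxb] with x hx
    refine (norm_le_add_rpow_of_norm_deriv_le hC hp (fun y hy => (hl (hsub y hy)).1)
      (fun y hy => ?_) (Ioo_subset_Ico_self hx)).trans (Real.le_norm_self _)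
    simpa [abs_of_nonneg (Real.rpow_nonneg (sub_pos.2 hy.2).le _)] using (hl (hsub y hy)).2
  have hconst : (fun _ => ‖f x₀‖) =o[𝓝[<] b] fun x => (b - x) ^ p :=
    isLittleO_const_left.2 <| .inr <| tendsto_norm_atTop_atTop.comp <|
      (tendsto_rpow_neg_nhdsGT_zero hp).comp (tendsto_sub_nhdsLT b)
  exact hbound.trans (hconst.isBigO.add (isBigO_const_mul_self _ _ _))

theorem isBigO_rpow_of_iteratedDeriv (hp : p < 0) (hf : ∀ᶠ x in 𝓝[<] b, ContDiffAt ℝ k f x)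
    (h : iteratedDeriv k f =O[𝓝[<] b] fun x => (b - x) ^ (p - k)) :
    f =O[𝓝[<] b] fun x => (b - x) ^ p := by
  induction k generalizing f p with
  | zero => simpa using h
  | succ k ih =>
    rw [Nat.cast_add_one] at hf
    refine isBigO_rpow_of_hasDerivAt hp (hf.mono fun x hx =>
      (hx.differentiableAt (by simp)).hasDerivAt) (ih (by linarith)
      (hf.mono fun x hx => hx.derivWithin le_rfl) ?_)
    rwa [iteratedDeriv_succ', Nat.cast_add_one, ← sub_sub, sub_right_comm] at h

theorem integrableAtFilter_sub_rpow (b : ℝ) (hp : -1 < p) :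
    IntegrableAtFilter (fun x => (b - x) ^ p) (𝓝[<] b) := by
  have h := ((intervalIntegral.intervalIntegrable_rpow' hp (a := 0) (b := 1)).comp_sub_left b).symm
  rw [sub_zero, intervalIntegrable_iff_integrableOn_Ioo_of_le (by linarith)] at h
  exact ⟨_, Ioo_mem_nhdsLT (by linarith), h⟩

theorem integrableOn_Ioo_of_isBigO_rpow (hp : -1 < p) (hab : a < b) (hf : ContinuousOn f (Ico a b))
    (h : f =O[𝓝[<] b] fun x => (b - x) ^ p) : IntegrableOn f (Ioo a b) := by
  have hmeas : StronglyMeasurableAtFilter f (𝓝[<] b) := by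
    rw [← nhdsWithin_Ioo_eq_nhdsLT hab]
    exact (hf.mono Ioo_subset_Ico_self).stronglyMeasurableAtFilter_nhdsWithin measurableSet_Ioo b
  obtain ⟨t, ht, hft⟩ := h.integrableAtFilter hmeas (integrableAtFilter_sub_rpow b hp)
  obtain ⟨l, hlb, hl⟩ := mem_nhdsLT_iff_exists_Ioo_subset.1 ht
  have hleft : IntegrableOn f (Icc a l) :=
    (hf.mono (Icc_subset_Ico_right hlb)).integrableOn_Icc
  refine (hleft.union (hft.mono_set hl)).mono_set fun x hx => ?_
  exact (le_or_gt x l).imp (fun h => ⟨hx.1.le, h⟩) fun h => ⟨h, hx.2⟩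

theorem integrableOn_Ioo_of_isBigO_weighted_iteratedDeriv (hf : ContDiffOn ℝ k f (Ioo a b))
    (hε : 0 < ε) (h : (fun x => (b - x) ^ k * iteratedDerivWithin k f (Ioo a b) x) =O[𝓝[<] b]
      fun x => (b - x) ^ (-1 + ε)) (hc : c ∈ Ioo a b) : IntegrableOn f (Ioo c b) := by
  have hab : Ioo a b ∈ 𝓝[<] b := Ioo_mem_nhdsLT (hc.1.trans hc.2)
  have hε' : 0 < min ε (1 / 2) := lt_min hε one_half_pos
  have hp : -1 + min ε (1 / 2) < 0 := by linarith [min_le_right ε (1 / 2)]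
  have hle : -1 + min ε (1 / 2) ≤ -1 + ε := by linarith [min_le_left ε (1 / 2)]
  refine integrableOn_Ioo_of_isBigO_rpow (by linarith) hc.2
    (hf.continuousOn.mono (Ico_subset_Ioo_left hc.1)) (isBigO_rpow_of_iteratedDeriv hp
      (mem_of_superset hab fun x hx => hf.contDiffAt (isOpen_Ioo.mem_nhds hx)) ?_)
  refine ((isBigO_refl (fun x => ((b - x) ^ k)⁻¹) _).mul
    (h.trans (isBigO_sub_rpow_of_le b hle))).congr' ?_ ?_
  · filter_upwards [hab] with x hx
    rw [inv_mul_cancel_left₀ (pow_pos (sub_pos.2 hx.2) k).ne',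
      iteratedDerivWithin_of_isOpen isOpen_Ioo hx]
  · filter_upwards [hab] with x hx
    rw [Real.rpow_sub (sub_pos.2 hx.2), Real.rpow_natCast, inv_mul_eq_div]

theorem integrableOn_Ioo_of_abs_weighted_iteratedDeriv_le {C δ : ℝ}
    (hf : ContDiffOn ℝ k f (Ioo a b)) (hε : 0 < ε) (hδ : 0 < δ)
    (h : ∀ x ∈ Ioo (b - δ) b,
      |(b - x) ^ k * iteratedDerivWithin k f (Ioo a b) x| ≤ C * (b - x) ^ (-1 + ε))
    (hc : c ∈ Ioo a b) : IntegrableOn f (Ioo c b) := by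
  refine integrableOn_Ioo_of_isBigO_weighted_iteratedDeriv hf hε (.of_bound C ?_) hc
  filter_upwards [Ioo_mem_nhdsLT (sub_lt_self b hδ)] with x hx
  rw [Real.norm_eq_abs, Real.norm_of_nonneg (Real.rpow_nonneg (sub_pos.2 hx.2).le _)]
  exact h x hx

end Growth

section ChangeOfVariables

variable {φ : ℝ → ℝ} {a b c i η s : ℝ}

/-- The density of `φ(ℰ) dℰ` with respect to the squared energy `u = ℰ²`. -/
noncomputable def sqEnergyDensity (φ : ℝ → ℝ) (u : ℝ) : ℝ :=
  (2 * √u)⁻¹ * φ (√u)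

theorem two_mul_sqEnergyDensity_sq (φ : ℝ → ℝ) {E : ℝ} (hE : 0 < E) :
    2 * E * sqEnergyDensity φ (E ^ 2) = φ E := by
  rw [sqEnergyDensity, Real.sqrt_sq hE.le, mul_inv_cancel_left₀ (by positivity)]

theorem image_sq_Ioo (ha : 0 ≤ a) (hb : 0 < b) :
    (fun E : ℝ => E ^ 2) '' Ioo a b = Ioo (a ^ 2) (b ^ 2) := by
  refine Subset.antisymm ?_ fun u hu => ⟨√u, ⟨Real.lt_sqrt_of_sq_lt hu.1, ?_⟩, ?_⟩
  · rintro _ ⟨E, hE, rfl⟩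
    exact ⟨pow_lt_pow_left₀ hE.1 ha two_ne_zero,
      pow_lt_pow_left₀ hE.2 (ha.trans hE.1.le) two_ne_zero⟩
  · exact (Real.sqrt_lt' hb).2 hu.2
  · exact Real.sq_sqrt ((sq_nonneg a).trans hu.1.le)

theorem hasDerivWithinAt_sq (s : Set ℝ) (x : ℝ) :
    HasDerivWithinAt (fun E : ℝ => E ^ 2) (2 * x) s x := by
  simpa using (hasDerivAt_pow 2 x).hasDerivWithinAt

theorem monotoneOn_sq_Ioo (ha : 0 ≤ a) (b : ℝ) : MonotoneOn (fun E : ℝ => E ^ 2) (Ioo a b) :=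
  fun _ hx _ _ hxy => pow_le_pow_left₀ (ha.trans hx.1.le) hxy 2

theorem integrableOn_sqEnergyDensity (ha : 0 ≤ a) (hb : 0 < b) (h : IntegrableOn φ (Ioo a b)) :
    IntegrableOn (sqEnergyDensity φ) (Ioo (a ^ 2) (b ^ 2)) := by
  rw [← image_sq_Ioo ha hb, integrableOn_image_iff_integrableOn_deriv_smul_of_monotoneOn
    measurableSet_Ioo (fun E _ => hasDerivWithinAt_sq _ E) (monotoneOn_sq_Ioo ha b)]
  exact h.congr_fun (fun E hE => (two_mul_sqEnergyDensity_sq φ (ha.trans_lt hE.1)).symm)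
    measurableSet_Ioo

theorem weylIntegral_indicator_Ioo (f : ℝ → ℝ) (i b : ℝ) (hcs : c ≤ s) :
    weylIntegral i (indicator (Ioo c b) f) s = ∫ u in Ioo s b, f u * (u - s) ^ i := by
  have hinter : Ioi s ∩ Ioo c b = Ioo s b := by
    rw [← Ioi_inter_Iio, ← inter_assoc, inter_eq_left.2 (Ioi_subset_Ioi hcs), Ioi_inter_Iio]
  rw [weylIntegral, ← hinter, ← setIntegral_indicator measurableSet_Ioo]
  simp only [indicator_mul_left]

theorem gfun_eq_weylIntegral (φ : ℝ → ℝ) (i : ℝ) (hη : 0 < η) (hc : c ≤ Real.exp (-2 * η)) :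
    gfun φ i η = (1 / 2) ^ i *
      weylIntegral i (indicator (Ioo c 1) (sqEnergyDensity φ)) (Real.exp (-2 * η)) := by
  have hpos := Real.exp_pos (-η)
  have hexp : Real.exp (-2 * η) = Real.exp (-η) ^ 2 := by
    rw [← Real.exp_nat_mul, Nat.cast_ofNat, mul_neg, neg_mul]
  rw [weylIntegral_indicator_Ioo _ i 1 hc, gfun, hexp,
    intervalIntegral.integral_of_le (Real.exp_le_one_iff.2 (neg_nonpos.2 hη.le)),
    integral_Ioc_eq_integral_Ioo, ← one_pow (M := ℝ) 2, ← image_sq_Ioo hpos.le one_pos, one_pow,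
    integral_image_eq_integral_deriv_smul_of_monotoneOn measurableSet_Ioo
      (fun E _ => hasDerivWithinAt_sq _ E) (monotoneOn_sq_Ioo hpos.le 1), ← integral_const_mul]
  refine setIntegral_congr_fun measurableSet_Ioo fun E hE => ?_
  have hdiff : 0 ≤ E ^ 2 - Real.exp (-η) ^ 2 :=
    sub_nonneg.2 (pow_le_pow_left₀ hpos.le hE.1.le 2)
  rw [smul_eq_mul, ← mul_assoc (2 * E), two_mul_sqEnergyDensity_sq φ (hpos.trans hE.1),
    div_eq_mul_one_div, Real.mul_rpow hdiff one_half_pos.le]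
  ring

end ChangeOfVariables

section KineticIntegral

variable {φ : ℝ → ℝ} {c i α η s : ℝ} {k : ℕ}

theorem contDiffAt_inv_two_mul_sqrt {n : WithTop ℕ∞} (hs : 0 < s) :
    ContDiffAt ℝ n (fun u => (2 * √u)⁻¹) s :=
  (contDiffAt_const.mul (Real.contDiffAt_sqrt hs.ne')).inv
    (mul_ne_zero two_ne_zero (Real.sqrt_ne_zero'.2 hs))

theorem contDiffAt_sqEnergyDensity {n : WithTop ℕ∞} (hs : 0 < s) (hφ : ContDiffAt ℝ n φ (√s)) :
    ContDiffAt ℝ n (sqEnergyDensity φ) s :=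
  (contDiffAt_inv_two_mul_sqrt hs).mul (hφ.comp s (Real.contDiffAt_sqrt hs.ne'))

theorem locallyHolderAt_iteratedDeriv_sqEnergyDensity (hα : 0 ≤ α) (hα1 : α ≤ 1) (hs : 0 < s)
    (hφ : ContDiffAt ℝ k φ (√s)) (hφH : LocallyHolderAt α (iteratedDeriv k φ) (√s)) :
    LocallyHolderAt α (iteratedDeriv k (sqEnergyDensity φ)) s :=
  .iteratedDeriv_mul_comp hα hα1 (contDiffAt_inv_two_mul_sqrt hs) (Real.contDiffAt_sqrt hs.ne')
    hφ hφH

theorem sqrt_mem_Ioo_zero_one (hs : s ∈ Ioo (0 : ℝ) 1) : √s ∈ Ioo (0 : ℝ) 1 :=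
  ⟨Real.sqrt_pos.2 hs.1, (Real.sqrt_lt' one_pos).2 (by simpa using hs.2)⟩

theorem integrable_indicator_sqEnergyDensity (hc : 0 < c)
    (hφ : IntegrableOn φ (Ioo (√c) 1)) :
    Integrable (indicator (Ioo c 1) (sqEnergyDensity φ)) := by
  rw [integrable_indicator_iff measurableSet_Ioo]
  simpa [Real.sq_sqrt hc.le] using integrableOn_sqEnergyDensity c.sqrt_nonneg one_pos hφ

theorem hasCompactSupport_indicator_Ioo (f : ℝ → ℝ) (a b : ℝ) :
    HasCompactSupport (indicator (Ioo a b) f) :=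
  .intro isCompact_Icc fun _ hx => indicator_of_notMem (fun h => hx (Ioo_subset_Icc_self h)) f

theorem indicator_Ioo_eventuallyEq (f : ℝ → ℝ) {a b x : ℝ} (hx : x ∈ Ioo a b) :
    indicator (Ioo a b) f =ᶠ[𝓝 x] f :=
  eqOn_indicator.eventuallyEq_of_mem (isOpen_Ioo.mem_nhds hx)

theorem contDiffAt_gfun_of_contDiffAt_weylIntegral {n : ℕ} (hη : 0 < η) (hc : c < Real.exp (-2 * η))
    (h : ContDiffAt ℝ n (weylIntegral i (indicator (Ioo c 1) (sqEnergyDensity φ)))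
      (Real.exp (-2 * η))) : ContDiffAt ℝ n (gfun φ i) η := by
  have hexp : ContDiff ℝ n fun η => Real.exp (-2 * η) := by fun_prop
  refine (contDiffAt_const.mul (h.comp η hexp.contDiffAt)).congr_of_eventuallyEq ?_
    (f := fun η => (1 / 2) ^ i * _)
  filter_upwards [Ioi_mem_nhds hη, hexp.continuous.continuousAt.eventually_const_lt hc]
    with ξ hξ hcξ using gfun_eq_weylIntegral φ i hξ hcξ.le

theorem exp_neg_two_mul_mem_Ioo (hη : 0 < η) : Real.exp (-2 * η) ∈ Ioo (0 : ℝ) 1 :=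
  ⟨Real.exp_pos _, Real.exp_lt_one_iff.2 (by linarith)⟩

theorem contDiffAt_gfun_of_forall_eventuallyEq {n : ℕ}
    (hint : ∀ c ∈ Ioo (0 : ℝ) 1, IntegrableOn φ (Ioo c 1)) (hη : 0 < η)
    (h : ∀ g : ℝ → ℝ, LocallyIntegrable g → HasCompactSupport g →
      g =ᶠ[𝓝 (Real.exp (-2 * η))] sqEnergyDensity φ →
        ContDiffAt ℝ n (weylIntegral i g) (Real.exp (-2 * η))) :
    ContDiffAt ℝ n (gfun φ i) η := by
  obtain ⟨hs0, hs1⟩ := exp_neg_two_mul_mem_Ioo hη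
  have hc0 := half_pos hs0
  have hcs := half_lt_self hs0
  have hφ := hint _ (sqrt_mem_Ioo_zero_one ⟨hc0, hcs.trans hs1⟩)
  exact contDiffAt_gfun_of_contDiffAt_weylIntegral hη hcs <| h _
    (integrable_indicator_sqEnergyDensity hc0 hφ).locallyIntegrable
    (hasCompactSupport_indicator_Ioo _ _ _) (indicator_Ioo_eventuallyEq _ ⟨hcs, hs1⟩)

theorem contDiffOn_gfun (n : ℕ) (hi : -1 < i) (hn : n ≤ i + 1) (hφ : ContDiffOn ℝ k φ (Ioo 0 1))
    (hint : ∀ c ∈ Ioo (0 : ℝ) 1, IntegrableOn φ (Ioo c 1)) :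
    ContDiffOn ℝ (n + k : ℕ) (gfun φ i) (Ioi 0) := by
  refine fun η hη => (contDiffAt_gfun_of_forall_eventuallyEq hint hη fun g hg hgc hgφ =>
    contDiffAt_add_weylIntegral n hi hn hg hgc ?_).contDiffWithinAt
  have hs := exp_neg_two_mul_mem_Ioo hη
  exact (contDiffAt_sqEnergyDensity hs.1 (hφ.contDiffAt
    (isOpen_Ioo.mem_nhds (sqrt_mem_Ioo_zero_one hs)))).congr_of_eventuallyEq hgφ

theorem contDiffOn_gfun_of_locallyHolderAt (n : ℕ) (hin : i < n) (hα1 : α ≤ 1)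
    (hαi : n < α + i) (hφ : ContDiffOn ℝ k φ (Ioo 0 1))
    (hint : ∀ c ∈ Ioo (0 : ℝ) 1, IntegrableOn φ (Ioo c 1))
    (hφH : ∀ x ∈ Ioo (0 : ℝ) 1, LocallyHolderAt α (iteratedDeriv k φ) x) :
    ContDiffOn ℝ (n + k + 1 : ℕ) (gfun φ i) (Ioi 0) := by
  intro η hη
  have hs := exp_neg_two_mul_mem_Ioo hη
  have hsqrt := sqrt_mem_Ioo_zero_one hs
  have hφs := hφ.contDiffAt (isOpen_Ioo.mem_nhds hsqrt)
  refine (contDiffAt_gfun_of_forall_eventuallyEq hint hη fun g hg hgc hgφ =>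
    contDiffAt_add_succ_weylIntegral n hin hα1 hαi hg hgc
      ((contDiffAt_sqEnergyDensity hs.1 hφs).congr_of_eventuallyEq hgφ) ?_).contDiffWithinAt
  exact (locallyHolderAt_iteratedDeriv_sqEnergyDensity (by linarith) hα1 hs.1 hφs
    (hφH _ hsqrt)).congr_of_eventuallyEq (hgφ.symm.iteratedDeriv k)

end KineticIntegral

theorem floor_lt_of_forall_natCast_ne {i : ℝ} (hi : -1 < i) (hiN : ∀ j : ℕ, (j : ℝ) ≠ i) :
    ⌊i⌋ < i := by
  refine (Int.floor_le i).lt_of_ne fun h => ?_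
  have hfloor : -1 < ⌊i⌋ := by
    rw [← h] at hi
    exact_mod_cast hi
  obtain ⟨j, hj⟩ := Int.eq_ofNat_of_zero_le (show 0 ≤ ⌊i⌋ by omega)
  exact hiN j (by rw [← h, hj, Int.cast_natCast])

theorem stmt12_general {k : ℕ} {φ : ℝ → ℝ} (hφ : ContDiffOn ℝ k φ (Ioo 0 1))
    (hint : ∀ c ∈ Ioo (0 : ℝ) 1, IntegrableOn φ (Ioo c 1)) {i : ℝ} (hi : -1 < i) :
    ContDiffOn ℝ ((⌊i⌋ + k + 1).toNat) (gfun φ i) (Ioi 0) ∧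
      ((∀ j : ℕ, (j : ℝ) ≠ i) → ∀ α : ℝ, 1 + ⌊i⌋ - i < α →
        (∀ x ∈ Ioo (0 : ℝ) 1, LocallyHolderAt α
          (fun x => (1 - x) ^ k * iteratedDerivWithin k φ (Ioo 0 1) x) x) →
        ContDiffOn ℝ ((⌊i⌋ + k + 2).toNat) (gfun φ i) (Ioi 0)) := by
  have hfloor : -1 ≤ ⌊i⌋ := Int.le_floor.2 (by exact_mod_cast hi.le)
  obtain ⟨n, hn⟩ : ∃ n : ℕ, (n : ℤ) = ⌊i⌋ + 1 :=
    (Int.eq_ofNat_of_zero_le (by linarith)).imp fun _ => Eq.symm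
  have hni : (n : ℝ) = ⌊i⌋ + 1 := by exact_mod_cast hn
  rw [show (⌊i⌋ + k + 1).toNat = n + k by omega, show (⌊i⌋ + k + 2).toNat = n + k + 1 by omega]
  refine ⟨contDiffOn_gfun n hi (by linarith [Int.floor_le i]) hφ hint, fun hiN α hα hφH => ?_⟩
  have hlt : ⌊i⌋ < i := floor_lt_of_forall_natCast_ne hi hiN
  have hin : i < n := hni ▸ Int.lt_floor_add_one i
  refine contDiffOn_gfun_of_locallyHolderAt n hin (min_le_right α 1) ?_ hφ hint
    fun x hx => locallyHolderAt_iteratedDeriv_of_weighted hφ hx (by linarith) (hφH x hx)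
  rw [← sub_lt_iff_lt_add]
  exact lt_min (by linarith) (by linarith)

/-- Let `φ : (0,1) → [0,∞)` be `C^k` with
`|(1-ℰ)^k φ^{(k)}(ℰ)| ≤ C(1-ℰ)^{-1+ε}` near `ℰ = 1`. Then for every `i > -1`,
`g_i` is `C^{⌊i⌋+k+1}` on `(0,∞)`; if moreover `i ∉ ℕ` and
`ℰ ↦ (1-ℰ)^k φ^{(k)}(ℰ)` is Hölder continuous with exponent `α > 1 + ⌊i⌋ - i`,
then `g_i` is `C^{⌊i⌋+k+2}` on `(0,∞)`. -/
theorem stmt12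
    (k : ℕ) (φ : ℝ → ℝ)
    (hφnonneg : ∀ x ∈ Ioo (0:ℝ) 1, 0 ≤ φ x)
    (hφCk : ContDiffOn ℝ k φ (Ioo 0 1))
    (hφbound : ∃ C > (0:ℝ), ∃ ε > (0:ℝ), ∃ δ ∈ Ioo (0:ℝ) 1,
      ∀ x ∈ Ioo (1 - δ) 1,
        |(1 - x) ^ k * iteratedDerivWithin k φ (Ioo 0 1) x| ≤ C * (1 - x) ^ (-1 + ε)) :
    (∀ i : ℝ, -1 < i →
      ContDiffOn ℝ ((⌊i⌋ + k + 1).toNat) (gfun φ i) (Ioi 0)) ∧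
    (∀ i : ℝ, -1 < i → (∀ j : ℕ, (j : ℝ) ≠ i) → ∀ α : ℝ, 1 + ⌊i⌋ - i < α →
      ∀ Cα : ℝ,
      (∀ x ∈ Ioo (0:ℝ) 1, ∀ y ∈ Ioo (0:ℝ) 1,
        |(1 - x) ^ k * iteratedDerivWithin k φ (Ioo 0 1) x -
          (1 - y) ^ k * iteratedDerivWithin k φ (Ioo 0 1) y| ≤ Cα * |x - y| ^ α) →
      ContDiffOn ℝ ((⌊i⌋ + k + 2).toNat) (gfun φ i) (Ioi 0)) := by
  obtain ⟨C, -, ε, hε, δ, hδ, hbound⟩ := hφbound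
  have hint : ∀ c ∈ Ioo (0 : ℝ) 1, IntegrableOn φ (Ioo c 1) :=
    fun _ => integrableOn_Ioo_of_abs_weighted_iteratedDeriv_le hφCk hε hδ.1 hbound
  exact ⟨fun i hi => (stmt12_general hφCk hint hi).1, fun i hi hiN α hα Cα hH =>
    (stmt12_general hφCk hint hi).2 hiN α hα fun x hx =>
      .of_forall_abs_sub_le (isOpen_Ioo.mem_nhds hx) hH⟩
end

section
/- Let φ: (0,1) → [0,∞) be continuous and asymptotically polytropic, i.e., there exist constants φ₋ > 0 and n > 1/2 such that φ(ℰ) = φ₋(1−ℰ)^{n−3/2}·(1 + o(1)) as ℰ → 1⁻. Then for every real i > −1 there exists a constant c_i > 0 such that g_i(η) = c_i·η^{i+n−1/2}·(1 + o(1)) as η → 0⁺, where g_i(η) = ∫_{e^{−η}}^{1} φ(ℰ)·[(ℰ² − e^{−2η})/2]^i dℰ. Moreover, for i > 0 the derivative satisfies g_i'(η) = i·e^{−2η}·g_{i−1}(η) = i·c_{i−1}·η^{i+n−3/2}·(1 + o(1)) as η → 0⁺. -/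
open Filter Set

/-! Write `φ x = (1 - x) ^ p * ψ x` with `p = n - 3 / 2 > -1` and `ψ` continuous on `(0, 1]`,
`ψ 1 = φ₋`, and put `a = exp (-η)`. The substitution `x = a + (1 - a) * t` turns the kinetic
integral into `(1 - a) ^ (i + p + 1)` times an integral over `[0, 1]` whose only singular factor is
the beta weight `t ^ i * (1 - t) ^ p`. By dominated convergence that integral is continuous in `a`
up to `a = 1`, where it equals `φ₋ * B(i + 1, p + 1)`; since `1 - exp (-η) ~ η`, this gives the
asymptotics with `c_i = φ₋ * B(i + 1, n - 1 / 2)`.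

For `0 < i < 1` the `a`-derivative of `((x ^ 2 - a ^ 2) / 2) ^ i` blows up at the moving endpoint
`x = a`, so one does not differentiate under the integral sign. Instead this power is written as
`∫ b in a..x, i * b * ((x ^ 2 - b ^ 2) / 2) ^ (i - 1)`; Fubini on the triangle `a < b < x < 1`
exhibits `g_i` as a primitive of the continuous function `-i * b * g_{i-1}(b)` of `b = exp (-η)`. -/

open MeasureTheory ProbabilityTheory Function
open scoped Topology Interval

section Beta

variable {i p : ℝ}

lemma ofReal_rpow_mul_one_sub_rpow {t : ℝ} (ht : t ∈ Icc (0 : ℝ) 1) :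
    ((t ^ i * (1 - t) ^ p : ℝ) : ℂ) =
      (t : ℂ) ^ (((i + 1 : ℝ) : ℂ) - 1) * (1 - (t : ℂ)) ^ (((p + 1 : ℝ) : ℂ) - 1) := by
  rw [Complex.ofReal_mul, Complex.ofReal_cpow ht.1, Complex.ofReal_cpow (sub_nonneg.2 ht.2)]
  push_cast
  simp only [add_sub_cancel_right]

lemma intervalIntegrable_rpow_mul_one_sub_rpow (hi : -1 < i) (hp : -1 < p) :
    IntervalIntegrable (fun t : ℝ ↦ t ^ i * (1 - t) ^ p) volume 0 1 := by
  have h := Complex.betaIntegral_convergent (u := ((i + 1 : ℝ) : ℂ)) (v := ((p + 1 : ℝ) : ℂ))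
    (by rw [Complex.ofReal_re]; linarith) (by rw [Complex.ofReal_re]; linarith)
  rw [intervalIntegrable_iff_integrableOn_Ioc_of_le zero_le_one] at h ⊢
  refine IntegrableOn.congr_fun h.re (fun t ht ↦ ?_) measurableSet_Ioc
  simp only [← ofReal_rpow_mul_one_sub_rpow ⟨ht.1.le, ht.2⟩, RCLike.re_to_complex,
    Complex.ofReal_re]

lemma integral_rpow_mul_one_sub_rpow (hi : -1 < i) (hp : -1 < p) :
    ∫ t in (0 : ℝ)..1, t ^ i * (1 - t) ^ p = beta (i + 1) (p + 1) := by
  rw [beta_eq_betaIntegralReal _ _ (by linarith) (by linarith), Complex.betaIntegral,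
    ← Complex.ofReal_re (∫ t in (0 : ℝ)..1, t ^ i * (1 - t) ^ p),
    ← intervalIntegral.integral_ofReal]
  congr 1
  refine intervalIntegral.integral_congr fun t ht ↦ ofReal_rpow_mul_one_sub_rpow ?_
  rwa [uIcc_of_le zero_le_one] at ht

end Beta

lemma continuousOn_intervalIntegral_mul_of_isCompact {X : Type*} [TopologicalSpace X]
    [FirstCountableTopology X] {μ : Measure ℝ} {K : X → ℝ → ℝ} {w : ℝ → ℝ} {s : Set X} {a b : ℝ}
    (hs : IsCompact s) (hK : ContinuousOn (uncurry K) (s ×ˢ [[a, b]]))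
    (hw : IntervalIntegrable w μ a b) :
    ContinuousOn (fun x ↦ ∫ t in a..b, K x t * w t ∂μ) s := by
  obtain ⟨C, hC⟩ := (hs.prod isCompact_uIcc).exists_bound_of_continuousOn hK
  intro x₀ hx₀
  refine intervalIntegral.continuousWithinAt_of_dominated_interval
    (bound := fun t ↦ C * ‖w t‖) ?_ ?_ (hw.norm.const_mul C) ?_
  · filter_upwards [self_mem_nhdsWithin] with x hx
    have hKx : ContinuousOn (K x) [[a, b]] :=
      hK.comp (f := fun t ↦ (x, t)) (by fun_prop) fun t ht ↦ ⟨hx, ht⟩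
    exact ((hKx.mono uIoc_subset_uIcc).aestronglyMeasurable measurableSet_uIoc).mul
      hw.def'.aestronglyMeasurable
  · filter_upwards [self_mem_nhdsWithin] with x hx
    refine Eventually.of_forall fun t ht ↦ ?_
    rw [norm_mul]
    exact mul_le_mul_of_nonneg_right (hC (x, t) ⟨hx, uIoc_subset_uIcc ht⟩) (norm_nonneg _)
  · refine Eventually.of_forall fun t ht ↦ ?_
    have hKt : ContinuousOn (fun x ↦ K x t) s :=
      hK.comp (f := fun x ↦ (x, t)) (by fun_prop) fun x hx ↦ ⟨hx, uIoc_subset_uIcc ht⟩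
    exact (hKt x₀ hx₀).mul continuousWithinAt_const

section Triangle

/-- The open triangle `{(x, y) | a < x < y < c}`, the domain on which the order of integration
is exchanged to differentiate the kinetic integrals. -/
def openTriangle (a c : ℝ) : Set (ℝ × ℝ) := {q | a < q.1 ∧ q.1 < q.2 ∧ q.2 < c}

variable {E : Type*} [NormedAddCommGroup E] {a c : ℝ} {F : ℝ × ℝ → E}

lemma isOpen_openTriangle (a c : ℝ) : IsOpen (openTriangle a c) :=
  (isOpen_lt continuous_const continuous_fst).and
    ((isOpen_lt continuous_fst continuous_snd).and (isOpen_lt continuous_snd continuous_const))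

lemma indicator_openTriangle_mk_left (F : ℝ × ℝ → E) (x : ℝ) :
    (fun y ↦ (openTriangle a c).indicator F (x, y)) =
      (Ioo a c).indicator (fun x ↦ (Ioo x c).indicator fun y ↦ F (x, y)) x := by
  ext y
  by_cases hx : x ∈ Ioo a c
  · rw [indicator_of_mem hx]
    exact indicator_eq_indicator ⟨fun h ↦ h.2, fun h ↦ ⟨hx.1, h⟩⟩ rfl
  · rw [indicator_of_notMem hx]
    exact indicator_of_notMem (fun h ↦ hx ⟨h.1, h.2.1.trans h.2.2⟩) F

lemma indicator_openTriangle_mk_right (F : ℝ × ℝ → E) (y : ℝ) :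
    (fun x ↦ (openTriangle a c).indicator F (x, y)) =
      (Ioo a c).indicator (fun y ↦ (Ioo a y).indicator fun x ↦ F (x, y)) y := by
  ext x
  by_cases hy : y ∈ Ioo a c
  · rw [indicator_of_mem hy]
    exact indicator_eq_indicator ⟨fun h ↦ ⟨h.1, h.2.1⟩, fun h ↦ ⟨h.1, h.2, hy.2⟩⟩ rfl
  · rw [indicator_of_notMem hy]
    exact indicator_of_notMem (fun h ↦ hy ⟨h.1.trans h.2.1, h.2.2⟩) F

lemma integral_indicator_openTriangle_mk_left [NormedSpace ℝ E] (F : ℝ × ℝ → E) :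
    (fun x ↦ ∫ y, (openTriangle a c).indicator F (x, y)) =
      (Ioo a c).indicator fun x ↦ ∫ y in Ioo x c, F (x, y) := by
  ext x
  by_cases hx : x ∈ Ioo a c <;>
    simp [indicator_openTriangle_mk_left, hx, integral_indicator]

lemma integral_indicator_openTriangle_mk_right [NormedSpace ℝ E] (F : ℝ × ℝ → E) :
    (fun y ↦ ∫ x, (openTriangle a c).indicator F (x, y)) =
      (Ioo a c).indicator fun y ↦ ∫ x in Ioo a y, F (x, y) := by
  ext y
  by_cases hy : y ∈ Ioo a c <;>
    simp [indicator_openTriangle_mk_right, hy, integral_indicator]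

lemma integrableOn_openTriangle
    (hF : AEStronglyMeasurable F (volume.restrict (openTriangle a c)))
    (hslice : ∀ y ∈ Ioo a c, IntegrableOn (fun x ↦ F (x, y)) (Ioo a y))
    (hnorm : IntegrableOn (fun y ↦ ∫ x in Ioo a y, ‖F (x, y)‖) (Ioo a c)) :
    IntegrableOn F (openTriangle a c) := by
  have hT : MeasurableSet (openTriangle a c) := (isOpen_openTriangle a c).measurableSet
  rw [← integrable_indicator_iff hT, Measure.volume_eq_prod, integrable_prod_iff'
    ((aestronglyMeasurable_indicator_iff hT).2 hF)]
  constructor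
  · refine Eventually.of_forall fun y ↦ ?_
    rw [indicator_openTriangle_mk_right]
    by_cases hy : y ∈ Ioo a c
    · simpa [hy, integrable_indicator_iff] using hslice y hy
    · simp [hy]
  · simp_rw [norm_indicator_eq_indicator_norm]
    rwa [integral_indicator_openTriangle_mk_right fun q ↦ ‖F q‖,
      integrable_indicator_iff measurableSet_Ioo]

variable [NormedSpace ℝ E]

lemma integrableOn_integral_openTriangle (hF : IntegrableOn F (openTriangle a c)) :
    IntegrableOn (fun x ↦ ∫ y in Ioo x c, F (x, y)) (Ioo a c) := by
  rw [← integrable_indicator_iff measurableSet_Ioo, ← integral_indicator_openTriangle_mk_left]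
  exact (hF.integrable_indicator (isOpen_openTriangle a c).measurableSet).integral_prod_left

lemma integral_integral_swap_openTriangle (hF : IntegrableOn F (openTriangle a c)) :
    ∫ y in Ioo a c, ∫ x in Ioo a y, F (x, y) = ∫ x in Ioo a c, ∫ y in Ioo x c, F (x, y) := by
  rw [← integral_indicator measurableSet_Ioo, ← integral_indicator measurableSet_Ioo,
    ← integral_indicator_openTriangle_mk_left, ← integral_indicator_openTriangle_mk_right]
  exact (integral_integral_swap (f := fun x y ↦ (openTriangle a c).indicator F (x, y))
    (hF.integrable_indicator (isOpen_openTriangle a c).measurableSet)).symm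

end Triangle

lemma tendsto_one_sub_exp_neg_div :
    Tendsto (fun η : ℝ ↦ (1 - Real.exp (-η)) / η) (𝓝[>] 0) (𝓝 1) := by
  have hderiv : HasDerivAt (fun η : ℝ ↦ -Real.exp (-η)) 1 0 := by
    simpa using (hasDerivAt_id (0 : ℝ)).neg.exp.fun_neg
  refine (hderiv.tendsto_slope.mono_left (nhdsGT_le_nhdsNE 0)).congr fun η ↦ ?_
  simp only [slope_def_field, neg_zero, Real.exp_zero, sub_zero, sub_neg_eq_add]
  ring

section Kernel

variable {i b y : ℝ}

lemma half_sq_sub_sq_pos (hb : 0 ≤ b) (hby : b < y) : 0 < (y ^ 2 - b ^ 2) / 2 := by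
  have : b ^ 2 < y ^ 2 := by gcongr
  linarith

lemma hasDerivAt_neg_half_sq_sub_sq_rpow (hb : 0 ≤ b) (hby : b < y) :
    HasDerivAt (fun x ↦ -((y ^ 2 - x ^ 2) / 2) ^ i)
      (i * b * ((y ^ 2 - b ^ 2) / 2) ^ (i - 1)) b := by
  have hbase : HasDerivAt (fun x ↦ (y ^ 2 - x ^ 2) / 2) (-b) b :=
    (((hasDerivAt_pow 2 b).const_sub (y ^ 2)).div_const 2).congr_deriv (by push_cast; ring)
  exact (hbase.rpow_const (Or.inl (half_sq_sub_sq_pos hb hby).ne')).fun_neg.congr_deriv (by ring)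

variable {a : ℝ}

lemma continuousOn_neg_half_sq_sub_sq_rpow (hi : 0 ≤ i) (s : Set ℝ) :
    ContinuousOn (fun x ↦ -((y ^ 2 - x ^ 2) / 2) ^ i) s :=
  (ContinuousOn.rpow_const (by fun_prop) fun _ _ ↦ Or.inr hi).neg

lemma integrableOn_mul_half_sq_sub_sq_rpow (hi : 0 < i) (ha : 0 ≤ a) :
    IntegrableOn (fun b ↦ i * b * ((y ^ 2 - b ^ 2) / 2) ^ (i - 1)) (Ioo a y) := by
  refine (intervalIntegral.integrableOn_deriv_of_nonneg
    (continuousOn_neg_half_sq_sub_sq_rpow hi.le _)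
    (fun b hb ↦ hasDerivAt_neg_half_sq_sub_sq_rpow (ha.trans hb.1.le) hb.2)
    fun b hb ↦ ?_).mono_set Ioo_subset_Ioc_self
  have hb0 : 0 ≤ b := ha.trans hb.1.le
  have := half_sq_sub_sq_pos hb0 hb.2
  positivity

lemma integral_mul_half_sq_sub_sq_rpow (hi : 0 < i) (ha : 0 ≤ a) (hay : a ≤ y) :
    ∫ b in Ioo a y, i * b * ((y ^ 2 - b ^ 2) / 2) ^ (i - 1) = ((y ^ 2 - a ^ 2) / 2) ^ i := by
  have hint := (intervalIntegrable_iff_integrableOn_Ioo_of_le hay).2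
    (integrableOn_mul_half_sq_sub_sq_rpow hi ha)
  rw [← integral_Ioc_eq_integral_Ioo, ← intervalIntegral.integral_of_le hay,
    intervalIntegral.integral_eq_sub_of_hasDerivAt_of_le hay
      (continuousOn_neg_half_sq_sub_sq_rpow hi.le _)
      (fun b hb ↦ hasDerivAt_neg_half_sq_sub_sq_rpow (ha.trans hb.1.le) hb.2) hint]
  simp [Real.zero_rpow hi.ne']

end Kernel

/-- `φ` is polytropic with exponent `p` and regular factor `ψ`: it equals `(1 - x) ^ p * ψ x` on
`(0, 1)`, where `ψ` is continuous up to and including the endpoint `1`. The value `ψ 1` is the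
leading coefficient `φ₋`; in terms of the polytropic index, `p = n - 3 / 2`. -/
structure IsPolytropicWith (φ : ℝ → ℝ) (p : ℝ) (ψ : ℝ → ℝ) : Prop where
  continuousOn_factor : ContinuousOn ψ (Ioc 0 1)
  eqOn : EqOn φ (fun x ↦ (1 - x) ^ p * ψ x) (Ioo 0 1)

/-- The kinetic integral `gfun φ i η` in the variable `a = exp (-η)`. -/
noncomputable def kineticIntegral (φ : ℝ → ℝ) (i a : ℝ) : ℝ :=
  ∫ x in a..1, φ x * ((x ^ 2 - a ^ 2) / 2) ^ i

/-- The kinetic integral of `(1 - x) ^ p * ψ x` over `[a, 1]`, transported to `[0, 1]` by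
`x = a + (1 - a) * t` and stripped of the factor `(1 - a) ^ (i + p + 1)`; only a beta weight,
which does not depend on `a`, remains singular. -/
noncomputable def rescaledIntegral (ψ : ℝ → ℝ) (p i a : ℝ) : ℝ :=
  ∫ t in (0 : ℝ)..1,
    ψ (a + (1 - a) * t) * ((2 * a + (1 - a) * t) / 2) ^ i * (t ^ i * (1 - t) ^ p)

lemma gfun_eq_kineticIntegral (φ : ℝ → ℝ) (i η : ℝ) :
    gfun φ i η = kineticIntegral φ i (Real.exp (-η)) := by
  rw [gfun, kineticIntegral, ← Real.exp_nat_mul, Nat.cast_ofNat, neg_mul_comm]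

lemma integral_mul_kernel_eq_mul_kineticIntegral (φ : ℝ → ℝ) (i : ℝ) {a : ℝ} (ha : a ≤ 1) :
    ∫ y in Ioo a 1, φ y * (i * a * ((y ^ 2 - a ^ 2) / 2) ^ (i - 1)) =
      i * a * kineticIntegral φ (i - 1) a := by
  rw [kineticIntegral, intervalIntegral.integral_of_le ha, integral_Ioc_eq_integral_Ioo,
    ← integral_const_mul]
  exact integral_congr_ae (Eventually.of_forall fun y ↦ mul_left_comm _ _ _)

lemma exp_neg_mem_Ioo {η : ℝ} (hη : 0 < η) : Real.exp (-η) ∈ Ioo (0 : ℝ) 1 :=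
  ⟨Real.exp_pos _, Real.exp_lt_one_iff.2 (neg_lt_zero.2 hη)⟩

lemma tendsto_exp_neg_nhdsWithin_Ioc :
    Tendsto (fun η : ℝ ↦ Real.exp (-η)) (𝓝[>] 0) (𝓝[Ioc 0 1] 1) := by
  refine tendsto_nhdsWithin_iff.2 ⟨?_, ?_⟩
  · exact (Continuous.tendsto' (by fun_prop) 0 1 (by simp)).mono_left nhdsWithin_le_nhds
  · filter_upwards [self_mem_nhdsWithin] with η hη using Ioo_subset_Ioc_self (exp_neg_mem_Ioo hη)

lemma add_one_sub_mul_mem_Ioc {a t : ℝ} (ha : a ∈ Ioc (0 : ℝ) 1) (ht : t ∈ Icc (0 : ℝ) 1) :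
    a + (1 - a) * t ∈ Ioc (0 : ℝ) 1 :=
  ⟨by nlinarith [ha.1, ha.2, ht.1], by nlinarith [ha.2, ht.2]⟩

lemma exists_isPolytropicWith {φ : ℝ → ℝ} {c p : ℝ} (hφ : ContinuousOn φ (Ioo 0 1)) (hc : c ≠ 0)
    (hlim : Tendsto (fun x ↦ φ x / (c * (1 - x) ^ p)) (𝓝[Ioo 0 1] 1) (𝓝 1)) :
    ∃ ψ : ℝ → ℝ, IsPolytropicWith φ p ψ ∧ ψ 1 = c := by
  have hpow : ∀ x ∈ Ioo (0 : ℝ) 1, (1 - x) ^ p ≠ 0 := fun x hx ↦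
    (Real.rpow_pos_of_pos (sub_pos.2 hx.2) p).ne'
  have hquot : ContinuousOn (fun x ↦ φ x / (1 - x) ^ p) (Ioo 0 1) :=
    hφ.div (ContinuousOn.rpow_const (by fun_prop) fun x hx ↦ Or.inl (sub_pos.2 hx.2).ne') hpow
  have hquot_lim : Tendsto (fun x ↦ φ x / (1 - x) ^ p) (𝓝[<] 1) (𝓝 c) := by
    rw [← nhdsWithin_Ioo_eq_nhdsLT (zero_lt_one' ℝ), ← mul_one c]
    refine (hlim.const_mul c).congr fun x ↦ ?_
    rw [← mul_div_assoc, mul_div_mul_left _ _ hc]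
  refine ⟨extendFrom (Ioo 0 1) fun x ↦ φ x / (1 - x) ^ p,
    ⟨continuousOn_Ioc_extendFrom_Ioo hquot hquot_lim, fun x hx ↦ ?_⟩,
    eq_lim_at_right_extendFrom_Ioo zero_lt_one hquot_lim⟩
  simp only [extendFrom_extends hquot x hx, mul_div_cancel₀ _ (hpow x hx)]

section RescaledIntegral

variable {ψ : ℝ → ℝ} {p i : ℝ}

lemma continuousOn_rescaled_kernel (hψ : ContinuousOn ψ (Ioc 0 1)) (i : ℝ) :
    ContinuousOn (uncurry fun a t ↦ ψ (a + (1 - a) * t) * ((2 * a + (1 - a) * t) / 2) ^ i)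
      (Ioc 0 1 ×ˢ Icc 0 1) := by
  refine ContinuousOn.mul (hψ.comp (by fun_prop) fun q hq ↦ add_one_sub_mul_mem_Ioc hq.1 hq.2)
    (ContinuousOn.rpow_const (by fun_prop) fun q hq ↦ Or.inl ?_)
  have := (add_one_sub_mul_mem_Ioc hq.1 hq.2).1
  have := hq.1.1
  linarith

lemma continuousOn_rescaledIntegral (hψ : ContinuousOn ψ (Ioc 0 1)) (hp : -1 < p) (hi : -1 < i) :
    ContinuousOn (rescaledIntegral ψ p i) (Ioc 0 1) := by
  refine continuousOn_of_locally_continuousOn fun a ha ↦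
    ⟨Ioi (a / 2), isOpen_Ioi, half_lt_self ha.1, ?_⟩
  have hcompact : ContinuousOn (rescaledIntegral ψ p i) (Icc (a / 2) 1) := by
    refine continuousOn_intervalIntegral_mul_of_isCompact isCompact_Icc
      ((continuousOn_rescaled_kernel hψ i).mono ?_) (intervalIntegrable_rpow_mul_one_sub_rpow hi hp)
    rw [uIcc_of_le zero_le_one]
    exact prod_mono_left fun b hb ↦ ⟨(half_pos ha.1).trans_le hb.1, hb.2⟩
  exact hcompact.mono fun b hb ↦ ⟨hb.2.le, hb.1.2⟩

lemma rescaledIntegral_one (hp : -1 < p) (hi : -1 < i) :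
    rescaledIntegral ψ p i 1 = ψ 1 * beta (i + 1) (p + 1) := by
  simp [rescaledIntegral, integral_rpow_mul_one_sub_rpow hi hp]

end RescaledIntegral

namespace IsPolytropicWith

variable {φ ψ : ℝ → ℝ} {p i a : ℝ}

lemma kineticIntegral_eq (h : IsPolytropicWith φ p ψ) (ha : a ∈ Ioo (0 : ℝ) 1) :
    kineticIntegral φ i a = (1 - a) ^ (i + p + 1) * rescaledIntegral ψ p i a := by
  have hsubst := intervalIntegral.smul_integral_comp_add_mul (a := 0) (b := 1)
    (fun x ↦ φ x * ((x ^ 2 - a ^ 2) / 2) ^ i) (1 - a) a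
  rw [mul_zero, add_zero, mul_one, add_sub_cancel] at hsubst
  rw [kineticIntegral, rescaledIntegral, ← hsubst, smul_eq_mul,
    ← intervalIntegral.integral_const_mul, ← intervalIntegral.integral_const_mul]
  refine intervalIntegral.integral_congr_Ioo_of_le zero_le_one fun t ht ↦ ?_
  have ha₀ : 0 < a := ha.1
  have ha₁ : 0 < 1 - a := sub_pos.2 ha.2
  have ht₀ : 0 < t := ht.1
  have ht₁ : 0 < 1 - t := sub_pos.2 ht.2
  have hx : 1 - (a + (1 - a) * t) = (1 - a) * (1 - t) := by ring
  have hmem : a + (1 - a) * t ∈ Ioo (0 : ℝ) 1 :=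
    ⟨by positivity, sub_pos.1 (hx ▸ mul_pos ha₁ ht₁)⟩
  have hbase : ((a + (1 - a) * t) ^ 2 - a ^ 2) / 2 =
      (1 - a) * t * ((2 * a + (1 - a) * t) / 2) := by ring
  simp only [h.eqOn hmem, hx, hbase]
  rw [Real.mul_rpow ha₁.le ht₁.le, Real.mul_rpow (by positivity) (by positivity),
    Real.mul_rpow ha₁.le ht₀.le, Real.rpow_add ha₁, Real.rpow_add ha₁, Real.rpow_one]
  ring

lemma continuousOn_kineticIntegral (h : IsPolytropicWith φ p ψ) (hp : -1 < p) (hi : -1 < i) :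
    ContinuousOn (kineticIntegral φ i) (Ioo 0 1) := by
  have hpow : ContinuousOn (fun a : ℝ ↦ (1 - a) ^ (i + p + 1)) (Ioo 0 1) :=
    ContinuousOn.rpow_const (by fun_prop) fun a ha ↦ Or.inl (sub_pos.2 ha.2).ne'
  exact (hpow.mul ((continuousOn_rescaledIntegral h.continuousOn_factor hp hi).mono
    Ioo_subset_Ioc_self)).congr fun a ha ↦ h.kineticIntegral_eq ha

lemma continuousOn_Ioo (h : IsPolytropicWith φ p ψ) : ContinuousOn φ (Ioo 0 1) := by
  have hpow : ContinuousOn (fun x : ℝ ↦ (1 - x) ^ p) (Ioo 0 1) :=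
    ContinuousOn.rpow_const (by fun_prop) fun x hx ↦ Or.inl (sub_pos.2 hx.2).ne'
  exact (hpow.mul (h.continuousOn_factor.mono Ioo_subset_Ioc_self)).congr h.eqOn

lemma integrableOn_mul (h : IsPolytropicWith φ p ψ) (hp : -1 < p) (ha : a ∈ Ioo (0 : ℝ) 1)
    {k : ℝ → ℝ} (hk : ContinuousOn k (Icc a 1)) : IntegrableOn (fun x ↦ φ x * k x) (Ioo a 1) := by
  have hpow : IntervalIntegrable (fun x : ℝ ↦ (1 - x) ^ p) volume a 1 := by
    simpa using (intervalIntegral.intervalIntegrable_rpow' (a := 1 - a) (b := 0) hp).comp_sub_left 1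
  have hψk : ContinuousOn (fun x ↦ ψ x * k x) [[a, 1]] := by
    rw [uIcc_of_le ha.2.le]
    exact (h.continuousOn_factor.mono fun x hx ↦ ⟨ha.1.trans_le hx.1, hx.2⟩).mul hk
  refine ((intervalIntegrable_iff_integrableOn_Ioo_of_le ha.2.le).1
    (hpow.mul_continuousOn hψk)).congr_fun (fun x hx ↦ ?_) measurableSet_Ioo
  simp only [h.eqOn ⟨ha.1.trans hx.1, hx.2⟩, mul_assoc]

lemma integrableOn_mul_kernel (h : IsPolytropicWith φ p ψ) (hp : -1 < p) (hi : 0 < i)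
    (ha : a ∈ Ioo (0 : ℝ) 1) :
    IntegrableOn (fun q : ℝ × ℝ ↦ φ q.2 * (i * q.1 * ((q.2 ^ 2 - q.1 ^ 2) / 2) ^ (i - 1)))
      (openTriangle a 1) := by
  refine integrableOn_openTriangle (ContinuousOn.aestronglyMeasurable ?_
    (isOpen_openTriangle a 1).measurableSet) (fun y _ ↦
      (integrableOn_mul_half_sq_sub_sq_rpow hi ha.1.le).const_mul (φ y)) ?_
  · refine (h.continuousOn_Ioo.comp (by fun_prop) ?_).mul
      (ContinuousOn.mul (by fun_prop) (ContinuousOn.rpow_const (by fun_prop) ?_))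
    · exact fun q hq ↦ ⟨ha.1.trans (hq.1.trans hq.2.1), hq.2.2⟩
    · exact fun q hq ↦ Or.inl (half_sq_sub_sq_pos (ha.1.trans hq.1).le hq.2.1).ne'
  · have hk : ContinuousOn (fun y : ℝ ↦ ((y ^ 2 - a ^ 2) / 2) ^ i) (Icc a 1) :=
      ContinuousOn.rpow_const (by fun_prop) fun _ _ ↦ Or.inr hi.le
    refine IntegrableOn.congr_fun (h.integrableOn_mul hp ha hk).norm (fun y hy ↦ ?_)
      measurableSet_Ioo
    have hnorm : ∀ x ∈ Ioo a y, ‖φ y * (i * x * ((y ^ 2 - x ^ 2) / 2) ^ (i - 1))‖ =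
        ‖φ y‖ * (i * x * ((y ^ 2 - x ^ 2) / 2) ^ (i - 1)) := fun x hx ↦ by
      have hx₀ : 0 < x := ha.1.trans hx.1
      have := half_sq_sub_sq_pos hx₀.le hx.2
      rw [norm_mul, Real.norm_of_nonneg (r := i * x * _) (by positivity)]
    have := half_sq_sub_sq_pos ha.1.le hy.1
    rw [setIntegral_congr_fun measurableSet_Ioo hnorm, integral_const_mul,
      integral_mul_half_sq_sub_sq_rpow hi ha.1.le hy.1.le, norm_mul,
      Real.norm_of_nonneg (r := _ ^ i) (by positivity)]

lemma intervalIntegrable_mul_kineticIntegral (h : IsPolytropicWith φ p ψ) (hp : -1 < p)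
    (hi : 0 < i) (ha : a ∈ Ioo (0 : ℝ) 1) :
    IntervalIntegrable (fun b ↦ i * b * kineticIntegral φ (i - 1) b) volume a 1 :=
  (intervalIntegrable_iff_integrableOn_Ioo_of_le ha.2.le).2 <|
    (integrableOn_integral_openTriangle (h.integrableOn_mul_kernel hp hi ha)).congr_fun
      (fun _ hb ↦ integral_mul_kernel_eq_mul_kineticIntegral φ i hb.2.le) measurableSet_Ioo

lemma kineticIntegral_eq_integral (h : IsPolytropicWith φ p ψ) (hp : -1 < p) (hi : 0 < i)
    (ha : a ∈ Ioo (0 : ℝ) 1) :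
    kineticIntegral φ i a = ∫ b in a..1, i * b * kineticIntegral φ (i - 1) b :=
  calc kineticIntegral φ i a
    _ = ∫ y in Ioo a 1, φ y * ((y ^ 2 - a ^ 2) / 2) ^ i := by
      rw [kineticIntegral, intervalIntegral.integral_of_le ha.2.le, integral_Ioc_eq_integral_Ioo]
    _ = ∫ y in Ioo a 1, ∫ b in Ioo a y, φ y * (i * b * ((y ^ 2 - b ^ 2) / 2) ^ (i - 1)) :=
      setIntegral_congr_fun measurableSet_Ioo fun y hy ↦ by
        simp only [integral_const_mul, integral_mul_half_sq_sub_sq_rpow hi ha.1.le hy.1.le]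
    _ = ∫ b in Ioo a 1, ∫ y in Ioo b 1, φ y * (i * b * ((y ^ 2 - b ^ 2) / 2) ^ (i - 1)) :=
      integral_integral_swap_openTriangle (h.integrableOn_mul_kernel hp hi ha)
    _ = ∫ b in Ioo a 1, i * b * kineticIntegral φ (i - 1) b :=
      setIntegral_congr_fun measurableSet_Ioo fun b hb ↦
        integral_mul_kernel_eq_mul_kineticIntegral φ i hb.2.le
    _ = ∫ b in a..1, i * b * kineticIntegral φ (i - 1) b := by
      rw [intervalIntegral.integral_of_le ha.2.le, integral_Ioc_eq_integral_Ioo]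

lemma hasDerivAt_kineticIntegral (h : IsPolytropicWith φ p ψ) (hp : -1 < p) (hi : 0 < i)
    (ha : a ∈ Ioo (0 : ℝ) 1) :
    HasDerivAt (kineticIntegral φ i) (-(i * a * kineticIntegral φ (i - 1) a)) a := by
  have hcont : ContinuousOn (fun b ↦ i * b * kineticIntegral φ (i - 1) b) (Ioo 0 1) :=
    ContinuousOn.mul (by fun_prop) (h.continuousOn_kineticIntegral hp (by linarith))
  have hFTC := intervalIntegral.integral_hasDerivAt_left
    (h.intervalIntegrable_mul_kineticIntegral hp hi ha)
    (hcont.stronglyMeasurableAtFilter isOpen_Ioo a ha) (hcont.continuousAt (isOpen_Ioo.mem_nhds ha))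
  refine hFTC.congr_of_eventuallyEq ?_
  filter_upwards [isOpen_Ioo.mem_nhds ha] with b hb using h.kineticIntegral_eq_integral hp hi hb

lemma hasDerivAt_gfun (h : IsPolytropicWith φ p ψ) (hp : -1 < p) (hi : 0 < i) {η : ℝ}
    (hη : 0 < η) :
    HasDerivAt (gfun φ i) (i * Real.exp (-2 * η) * gfun φ (i - 1) η) η := by
  have hexp : HasDerivAt (fun η ↦ Real.exp (-η)) (-Real.exp (-η)) η := by
    simpa using (hasDerivAt_neg η).exp
  have hcomp := (h.hasDerivAt_kineticIntegral hp hi (exp_neg_mem_Ioo hη)).comp η hexp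
  rw [funext (gfun_eq_kineticIntegral φ i), gfun_eq_kineticIntegral]
  refine hcomp.congr_deriv ?_
  rw [show -2 * η = -η + -η by ring, Real.exp_add]
  ring

lemma tendsto_gfun_div (h : IsPolytropicWith φ p ψ) (hψ : ψ 1 ≠ 0) (hp : -1 < p) (hi : -1 < i) :
    Tendsto (fun η ↦ gfun φ i η / (ψ 1 * beta (i + 1) (p + 1) * η ^ (i + p + 1)))
      (𝓝[>] 0) (𝓝 1) := by
  set c := ψ 1 * beta (i + 1) (p + 1)
  have hc : c ≠ 0 := mul_ne_zero hψ (beta_pos (by linarith) (by linarith)).ne'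
  have hintegral : Tendsto (fun η ↦ rescaledIntegral ψ p i (Real.exp (-η))) (𝓝[>] 0) (𝓝 c) := by
    have hcont :=
      continuousOn_rescaledIntegral h.continuousOn_factor hp hi 1 (right_mem_Ioc.2 one_pos)
    rw [ContinuousWithinAt, rescaledIntegral_one hp hi] at hcont
    exact hcont.comp tendsto_exp_neg_nhdsWithin_Ioc
  have hpow : Tendsto (fun η : ℝ ↦ ((1 - Real.exp (-η)) / η) ^ (i + p + 1)) (𝓝[>] 0) (𝓝 1) := by
    simpa only [Real.one_rpow] using
      tendsto_one_sub_exp_neg_div.rpow_const (p := i + p + 1) (Or.inl one_ne_zero)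
  have hprod := hpow.mul (hintegral.div_const c)
  rw [div_self hc, one_mul] at hprod
  refine hprod.congr' ?_
  filter_upwards [self_mem_nhdsWithin] with η hη
  have hmem := exp_neg_mem_Ioo hη
  rw [gfun_eq_kineticIntegral, h.kineticIntegral_eq hmem,
    Real.div_rpow (sub_nonneg.2 hmem.2.le) (le_of_lt hη), div_mul_div_comm, mul_comm c]

end IsPolytropicWith

lemma tendsto_deriv_div_of_hasDerivAt_exp_mul {g f : ℝ → ℝ} {i c q : ℝ} (hi : i ≠ 0)
    (hg : ∀ η, 0 < η → HasDerivAt g (i * Real.exp (-2 * η) * f η) η)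
    (hf : Tendsto (fun η ↦ f η / (c * η ^ q)) (𝓝[>] 0) (𝓝 1)) :
    Tendsto (fun η ↦ deriv g η / (i * c * η ^ q)) (𝓝[>] 0) (𝓝 1) := by
  have hexp : Tendsto (fun η : ℝ ↦ Real.exp (-2 * η)) (𝓝[>] 0) (𝓝 1) :=
    (Continuous.tendsto' (by fun_prop) 0 1 (by simp)).mono_left nhdsWithin_le_nhds
  have hprod := hexp.mul hf
  rw [one_mul] at hprod
  refine hprod.congr' ?_
  filter_upwards [self_mem_nhdsWithin] with η hη
  rw [(hg η hη).deriv, mul_assoc i, mul_assoc i, mul_div_mul_left _ _ hi, mul_div_assoc]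

theorem stmt13_general
    (φ : ℝ → ℝ)
    (hφcont : ContinuousOn φ (Ioo 0 1))
    (φm n : ℝ) (hφm : 0 < φm) (hn : 1 / 2 < n)
    (hasym : Tendsto (fun x => φ x / (φm * (1 - x) ^ (n - 3 / 2)))
      (nhdsWithin 1 (Ioo 0 1)) (nhds 1)) :
    (∀ i : ℝ, -1 < i → ∃ c > (0:ℝ),
      Tendsto (fun η => gfun φ i η / (c * η ^ (i + n - 1 / 2)))
        (nhdsWithin 0 (Ioi 0)) (nhds 1)) ∧
    (∀ i : ℝ, 0 < i →
      (∀ η : ℝ, 0 < η →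
        HasDerivAt (gfun φ i) (i * Real.exp (-2 * η) * gfun φ (i - 1) η) η) ∧
      ∃ c > (0:ℝ),
        Tendsto (fun η => gfun φ (i - 1) η / (c * η ^ (i + n - 3 / 2)))
          (nhdsWithin 0 (Ioi 0)) (nhds 1) ∧
        Tendsto (fun η => deriv (gfun φ i) η / (i * c * η ^ (i + n - 3 / 2)))
          (nhdsWithin 0 (Ioi 0)) (nhds 1)) := by
  obtain ⟨ψ, hψ, rfl⟩ := exists_isPolytropicWith hφcont hφm.ne' hasym
  have hp : -1 < n - 3 / 2 := by linarith
  have hasym_gfun (i : ℝ) (hi : -1 < i) : ∃ c > (0 : ℝ),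
      Tendsto (fun η ↦ gfun φ i η / (c * η ^ (i + (n - 3 / 2) + 1))) (𝓝[>] 0) (𝓝 1) :=
    ⟨_, mul_pos hφm (beta_pos (by linarith) (by linarith)), hψ.tendsto_gfun_div hφm.ne' hp hi⟩
  refine ⟨fun i hi ↦ ?_, fun i hi ↦ ⟨fun η ↦ hψ.hasDerivAt_gfun hp hi, ?_⟩⟩
  · rw [show i + n - 1 / 2 = i + (n - 3 / 2) + 1 by ring]
    exact hasym_gfun i hi
  · obtain ⟨c, hc, hlim⟩ := hasym_gfun (i - 1) (by linarith)
    rw [show i - 1 + (n - 3 / 2) + 1 = i + n - 3 / 2 by ring] at hlim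
    exact ⟨c, hc, hlim,
      tendsto_deriv_div_of_hasDerivAt_exp_mul hi.ne' (fun η ↦ hψ.hasDerivAt_gfun hp hi) hlim⟩

/-- If `φ : (0,1) → [0,∞)` is continuous and asymptotically
polytropic, `φ(ℰ) = φ₋(1-ℰ)^{n-3/2}(1+o(1))` as `ℰ → 1⁻` with `φ₋ > 0`, `n > 1/2`,
then for every `i > -1` there is `c_i > 0` with
`g_i(η) = c_i η^{i+n-1/2}(1+o(1))` as `η → 0⁺`; moreover for `i > 0`,
`g_i'(η) = i e^{-2η} g_{i-1}(η) = i c_{i-1} η^{i+n-3/2}(1+o(1))`. -/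
theorem stmt13
    (φ : ℝ → ℝ)
    (hφcont : ContinuousOn φ (Ioo 0 1))
    (hφnonneg : ∀ x ∈ Ioo (0:ℝ) 1, 0 ≤ φ x)
    (φm n : ℝ) (hφm : 0 < φm) (hn : 1 / 2 < n)
    (hasym : Tendsto (fun x => φ x / (φm * (1 - x) ^ (n - 3 / 2)))
      (nhdsWithin 1 (Ioo 0 1)) (nhds 1)) :
    (∀ i : ℝ, -1 < i → ∃ c > (0:ℝ),
      Tendsto (fun η => gfun φ i η / (c * η ^ (i + n - 1 / 2)))
        (nhdsWithin 0 (Ioi 0)) (nhds 1)) ∧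
    (∀ i : ℝ, 0 < i →
      (∀ η : ℝ, 0 < η →
        HasDerivAt (gfun φ i) (i * Real.exp (-2 * η) * gfun φ (i - 1) η) η) ∧
      ∃ c > (0:ℝ),
        Tendsto (fun η => gfun φ (i - 1) η / (c * η ^ (i + n - 3 / 2)))
          (nhdsWithin 0 (Ioi 0)) (nhds 1) ∧
        Tendsto (fun η => deriv (gfun φ i) η / (i * c * η ^ (i + n - 3 / 2)))
          (nhdsWithin 0 (Ioi 0)) (nhds 1)) :=
  stmt13_general φ hφcont φm n hφm hn hasym
end

section
/- For every initial point (U₀,V₀,Ω₀) ∈ [0,1]² × (0,1) there exists a unique C¹ solution λ ↦ (U(λ),V(λ),Ω(λ)) of the Einstein–Vlasov dynamical system with (U,V,Ω)(0) = (U₀,V₀,Ω₀); this solution is defined for all λ ∈ ℝ (global existence) and takes values in [0,1]² × (0,1) for all λ. -/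
open Filter Set

/-
The only obstruction to a smooth system is `σ'`, which is merely continuous as a function of `Ω`.
Since `dΩ/dη = Ω(1 - Ω)F/σ`, one has `dσ/dλ = -σ σ' H` along solutions, and `σ'` enters the growth
rate of the odds `U/(1 - U)` and `V/(1 - V)` exactly as `+σ' H`. Multiplying both odds by `σ`
therefore removes `σ'` and leaves a system `xᵢ' = xᵢ(1 - xᵢ)rᵢ(x)` with bounded `C¹` rates on
`[0,1]² × (0,1)`. Such a system lifts along `x = (1 - cos θ)/2`, `Ω = sigmoid z` to a bounded `C¹`
field on `ℝ³`, whose flow is complete and projects to solutions that never leave the state space;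
uniqueness follows from the local Lipschitz property.
-/

open scoped NNReal Topology Manifold

section IntegralCurves

variable {E : Type*} [NormedAddCommGroup E] [NormedSpace ℝ E]

lemma locallyLipschitzOn_of_contDiffOn {F : Type*} [NormedAddCommGroup F] [NormedSpace ℝ F]
    {f : E → F} {s : Set E} (hf : ContDiffOn ℝ 1 f s) (hs : Convex ℝ s) :
    LocallyLipschitzOn s f :=
  fun x hx => (hf x hx).exists_lipschitzOnWith hs

theorem isIntegralCurve_unique_of_locallyLipschitzOn {v : E → E} {s : Set E}
    (hv : LocallyLipschitzOn s v) {γ γ' : ℝ → E} {t₀ : ℝ}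
    (hγ : IsIntegralCurve γ fun _ => v) (hγs : ∀ t, γ t ∈ s)
    (hγ' : IsIntegralCurve γ' fun _ => v) (hγs' : ∀ t, γ' t ∈ s) (h₀ : γ t₀ = γ' t₀) :
    γ = γ' := by
  ext t
  obtain ⟨a, ha⟩ := exists_lt (min t₀ t)
  obtain ⟨b, hb⟩ := exists_gt (max t₀ t)
  have ht₀ : t₀ ∈ Ioo a b := ⟨ha.trans_le (min_le_left _ _), (le_max_left _ _).trans_lt hb⟩
  have ht : t ∈ Ioo a b := ⟨ha.trans_le (min_le_right _ _), (le_max_right _ _).trans_lt hb⟩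
  let K := γ '' Icc a b ∪ γ' '' Icc a b
  have hK : IsCompact K :=
    (isCompact_Icc.image hγ.continuous).union (isCompact_Icc.image hγ'.continuous)
  have hKs : K ⊆ s :=
    union_subset (image_subset_iff.2 fun r _ => hγs r) (image_subset_iff.2 fun r _ => hγs' r)
  obtain ⟨c, hc⟩ := (hv.mono hKs).exists_lipschitzOnWith_of_compact hK
  exact ODE_solution_unique_of_mem_Ioo (s := fun _ => K) (fun _ _ => hc) ht₀
    (fun r hr => ⟨hγ r, .inl ⟨r, Ioo_subset_Icc_self hr, rfl⟩⟩)
    (fun r hr => ⟨hγ' r, .inr ⟨r, Ioo_subset_Icc_self hr, rfl⟩⟩) h₀ ht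

lemma exists_isIntegralCurveOn_Icc_of_bounded [ProperSpace E] {v : E → E}
    (hv : LocallyLipschitz v) {L : ℝ≥0} (hL : ∀ x, ‖v x‖ ≤ L) (x₀ : E) (T : ℝ≥0) :
    ∃ γ : ℝ → E, γ 0 = x₀ ∧ IsIntegralCurveOn γ (fun _ => v) (Icc (-T) T) := by
  obtain ⟨K, hK⟩ := hv.locallyLipschitzOn.exists_lipschitzOnWith_of_compact
    (isCompact_closedBall x₀ (L * T))
  have hpicard : IsPicardLindelof (fun _ => v) (tmin := -(T : ℝ)) (tmax := T)
      ⟨0, by simp⟩ x₀ (L * T) 0 L K :=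
    .of_time_independent (fun x _ => hL x) hK (by simp)
  exact hpicard.exists_eq_forall_mem_Icc_hasDerivWithinAt₀

theorem exists_isIntegralCurve_of_bounded [ProperSpace E] {v : E → E}
    (hv : ContDiff ℝ 1 v) {L : ℝ≥0} (hL : ∀ x, ‖v x‖ ≤ L) (x₀ : E) :
    ∃ γ : ℝ → E, γ 0 = x₀ ∧ IsIntegralCurve γ fun _ => v := by
  have hlocal : ∀ a : ℝ, ∃ γ : ℝ → E, γ 0 = x₀ ∧
      IsMIntegralCurveOn (I := 𝓘(ℝ, E)) γ v (Ioo (-a) a) := fun a => by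
    obtain ⟨γ, hγ₀, hγ⟩ := exists_isIntegralCurveOn_Icc_of_bounded hv.locallyLipschitz hL x₀ ‖a‖₊
    refine ⟨γ, hγ₀, fun t ht => ?_⟩
    have hsub : Ioo (-a) a ⊆ Icc (-‖a‖) ‖a‖ := fun r hr =>
      ⟨(neg_le_neg (le_abs_self a)).trans hr.1.le, hr.2.le.trans (le_abs_self a)⟩
    exact ((hγ.mono hsub) t ht).hasFDerivWithinAt.hasMFDerivWithinAt
  obtain ⟨γ, hγ₀, hγ⟩ := (exists_isMIntegralCurve_iff_exists_isMIntegralCurveOn_Ioo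
    (contMDiff_vectorSpace_iff_contDiff.2 hv) x₀).2 hlocal
  exact ⟨γ, hγ₀, fun t => hasDerivAt_iff_hasFDerivAt.2 (hγ t).hasFDerivAt⟩

end IntegralCurves

section Calculus

lemma contDiffOn_one_of_hasDerivAt {g g' : ℝ → ℝ} {t : Set ℝ} (ht : IsOpen t)
    (hg : ∀ x ∈ t, HasDerivAt g (g' x) x) (hg' : ContinuousOn g' t) : ContDiffOn ℝ 1 g t := by
  have h : ContDiffOn ℝ (0 + 1) g t := (contDiffOn_succ_iff_deriv_of_isOpen ht).2
    ⟨fun x hx => (hg x hx).differentiableAt.differentiableWithinAt, by simp,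
      contDiffOn_zero.2 (hg'.congr fun x hx => (hg x hx).deriv)⟩
  simpa only [zero_add] using h

variable {E F G : Type*} [NormedAddCommGroup E] [NormedSpace ℝ E] [CompleteSpace E]
  [NormedAddCommGroup F] [NormedSpace ℝ F] [NormedAddCommGroup G] [NormedSpace ℝ G]

theorem contDiffAt_of_comp_contDiffAt {n : WithTop ℕ∞} {h : F → G} {g : E → F} {k : E → G} {x : E}
    {g' : E ≃L[ℝ] F} (hg : ContDiffAt ℝ n g x) (hg' : HasFDerivAt g (g' : E →L[ℝ] F) x)
    (hn : n ≠ 0) (hk : ContDiffAt ℝ n k x) (hcomp : h ∘ g =ᶠ[𝓝 x] k) :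
    ContDiffAt ℝ n h (g x) := by
  let ψ := hg.localInverse hg' hn
  have hψx : ψ (g x) = x := hg.localInverse_apply_image hg' hn
  have hψ : ContDiffAt ℝ n ψ (g x) := hg.to_localInverse hg' hn
  have hψ_tendsto : Tendsto ψ (𝓝 (g x)) (𝓝 x) := by
    simpa only [hψx] using hψ.continuousAt.tendsto
  have hright : ∀ᶠ y in 𝓝 (g x), g (ψ y) = y :=
    (hg.hasStrictFDerivAt' hg' hn).eventually_right_inverse
  have heq : h =ᶠ[𝓝 (g x)] k ∘ ψ := by
    filter_upwards [hright, hψ_tendsto.eventually hcomp] with y hy hky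
    rw [Function.comp_apply, ← hky, Function.comp_apply, hy]
  exact (ContDiffAt.comp (g x) (by rwa [hψx]) hψ).congr_of_eventuallyEq heq

end Calculus

/-- The state space `[0,1]² × (0,1)`. -/
def stateSpace : Set (ℝ × ℝ × ℝ) := Icc 0 1 ×ˢ Icc 0 1 ×ˢ Ioo 0 1

/-- The vector field with components `xᵢ (1 - xᵢ) rᵢ(x)`, where `r` is the field of growth rates of
the log-odds `log (xᵢ / (1 - xᵢ))`; products are componentwise. -/
def logisticField (r : ℝ × ℝ × ℝ → ℝ × ℝ × ℝ) (p : ℝ × ℝ × ℝ) : ℝ × ℝ × ℝ :=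
  p * (1 - p) * r p

section LogisticSystems

variable {r : ℝ × ℝ × ℝ → ℝ × ℝ × ℝ}

lemma convex_stateSpace : Convex ℝ stateSpace :=
  (convex_Icc 0 1).prod ((convex_Icc 0 1).prod (convex_Ioo 0 1))

lemma contDiffOn_logisticField {n : WithTop ℕ∞} {s : Set (ℝ × ℝ × ℝ)} (hr : ContDiffOn ℝ n r s) :
    ContDiffOn ℝ n (logisticField r) s := by
  unfold logisticField
  fun_prop

/-- The covering `(θ, φ, z) ↦ ((1 - cos θ)/2, (1 - cos φ)/2, sigmoid z)` of the state space by `ℝ³`.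
Its folds over the faces of the square let a logistic field lift to a smooth field on `ℝ³`. -/
noncomputable def stateCover (p : ℝ × ℝ × ℝ) : ℝ × ℝ × ℝ :=
  ((1 - Real.cos p.1) / 2, (1 - Real.cos p.2.1) / 2, Real.sigmoid p.2.2)

/-- The lift of `logisticField r` along `stateCover`. -/
noncomputable def liftedField (r : ℝ × ℝ × ℝ → ℝ × ℝ × ℝ) (p : ℝ × ℝ × ℝ) : ℝ × ℝ × ℝ :=
  (Real.sin p.1 / 2, Real.sin p.2.1 / 2, 1) * r (stateCover p)

lemma stateCover_mem_stateSpace (p : ℝ × ℝ × ℝ) : stateCover p ∈ stateSpace := by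
  have hcos (x : ℝ) : (1 - Real.cos x) / 2 ∈ Icc (0 : ℝ) 1 :=
    ⟨by linarith [Real.cos_le_one x], by linarith [Real.neg_one_le_cos x]⟩
  exact ⟨hcos _, hcos _, Real.sigmoid_pos _, Real.sigmoid_lt_one _⟩

lemma surjOn_stateCover : SurjOn stateCover univ stateSpace := by
  rintro ⟨x, y, w⟩ ⟨hx, hy, hw⟩
  have hcos {x : ℝ} (hx : x ∈ Icc (0 : ℝ) 1) :
      (1 - Real.cos (Real.arccos (1 - 2 * x))) / 2 = x := by
    rw [Real.cos_arccos (by linarith [hx.2]) (by linarith [hx.1])]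
    ring
  obtain ⟨z, rfl⟩ : w ∈ range Real.sigmoid := Real.range_sigmoid ▸ hw
  exact ⟨(Real.arccos (1 - 2 * x), Real.arccos (1 - 2 * y), z), mem_univ _,
    Prod.ext (hcos hx) (Prod.ext (hcos hy) rfl)⟩

lemma contDiff_stateCover {n : WithTop ℕ∞} : ContDiff ℝ n stateCover := by
  have hsigmoid : ContDiff ℝ n fun p : ℝ × ℝ × ℝ => Real.sigmoid p.2.2 :=
    (contDiff_sigmoid.of_le le_top).comp (by fun_prop)
  unfold stateCover
  fun_prop

lemma contDiff_liftedField {n : WithTop ℕ∞} (hr : ContDiffOn ℝ n r stateSpace) :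
    ContDiff ℝ n (liftedField r) := by
  have hcomp : ContDiff ℝ n fun p => r (stateCover p) :=
    hr.comp_contDiff contDiff_stateCover stateCover_mem_stateSpace
  have hfactor : ContDiff ℝ n
      fun p : ℝ × ℝ × ℝ => (Real.sin p.1 / 2, Real.sin p.2.1 / 2, (1 : ℝ)) := by
    fun_prop
  exact hfactor.mul hcomp

lemma norm_liftedField_le (p : ℝ × ℝ × ℝ) : ‖liftedField r p‖ ≤ ‖r (stateCover p)‖ := by
  have hsin (x : ℝ) : ‖Real.sin x / 2‖ ≤ 1 := by
    rw [Real.norm_eq_abs, abs_le]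
    constructor <;> linarith [Real.sin_le_one x, Real.neg_one_le_sin x]
  have hfactor : ‖(Real.sin p.1 / 2, Real.sin p.2.1 / 2, (1 : ℝ))‖ ≤ 1 :=
    norm_prod_le_iff.2 ⟨hsin _, norm_prod_le_iff.2 ⟨hsin _, norm_one.le⟩⟩
  exact (norm_mul_le _ _).trans (mul_le_of_le_one_left (norm_nonneg _) hfactor)

lemma hasDerivAt_half_one_sub_cos {θ : ℝ → ℝ} {a t : ℝ}
    (hθ : HasDerivAt θ (Real.sin (θ t) / 2 * a) t) :
    HasDerivAt (fun t => (1 - Real.cos (θ t)) / 2)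
      ((1 - Real.cos (θ t)) / 2 * (1 - (1 - Real.cos (θ t)) / 2) * a) t := by
  refine ((hθ.cos.const_sub 1).div_const 2).congr_deriv ?_
  linear_combination a / 4 * Real.sin_sq_add_cos_sq (θ t)

lemma isIntegralCurve_stateCover_comp {γ : ℝ → ℝ × ℝ × ℝ}
    (hγ : IsIntegralCurve γ fun _ => liftedField r) :
    IsIntegralCurve (stateCover ∘ γ) fun _ => logisticField r := fun t => by
  have h₁ : HasDerivAt (fun t => (γ t).1) (liftedField r (γ t)).1 t := (hγ t).fst
  have h₂ : HasDerivAt (fun t => (γ t).2.1) (liftedField r (γ t)).2.1 t := (hγ t).snd.fst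
  have h₃ : HasDerivAt (fun t => (γ t).2.2) (1 * (r (stateCover (γ t))).2.2) t := (hγ t).snd.snd
  rw [one_mul] at h₃
  exact (hasDerivAt_half_one_sub_cos h₁).prodMk
    ((hasDerivAt_half_one_sub_cos h₂).prodMk ((Real.hasDerivAt_sigmoid _).comp t h₃))

theorem exists_isIntegralCurve_logisticField (hr : ContDiffOn ℝ 1 r stateSpace) {L : ℝ}
    (hL : ∀ p ∈ stateSpace, ‖r p‖ ≤ L) {p₀ : ℝ × ℝ × ℝ} (hp₀ : p₀ ∈ stateSpace) :
    ∃ γ : ℝ → ℝ × ℝ × ℝ, γ 0 = p₀ ∧ (∀ t, γ t ∈ stateSpace) ∧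
      IsIntegralCurve γ fun _ => logisticField r := by
  obtain ⟨x₀, -, rfl⟩ := surjOn_stateCover hp₀
  lift L to ℝ≥0 using (norm_nonneg _).trans (hL _ hp₀)
  obtain ⟨γ, hγ₀, hγ⟩ := exists_isIntegralCurve_of_bounded (contDiff_liftedField hr)
    (fun p => (norm_liftedField_le p).trans (hL _ (stateCover_mem_stateSpace p))) x₀
  exact ⟨stateCover ∘ γ, congrArg stateCover hγ₀, fun t => stateCover_mem_stateSpace _,
    isIntegralCurve_stateCover_comp hγ⟩

theorem isIntegralCurve_logisticField_unique (hr : ContDiffOn ℝ 1 r stateSpace)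
    {γ γ' : ℝ → ℝ × ℝ × ℝ}
    (hγ : IsIntegralCurve γ fun _ => logisticField r) (hγs : ∀ t, γ t ∈ stateSpace)
    (hγ' : IsIntegralCurve γ' fun _ => logisticField r) (hγs' : ∀ t, γ' t ∈ stateSpace)
    {t₀ : ℝ} (h₀ : γ t₀ = γ' t₀) : γ = γ' :=
  isIntegralCurve_unique_of_locallyLipschitzOn
    (locallyLipschitzOn_of_contDiffOn (contDiffOn_logisticField hr) convex_stateSpace)
    hγ hγs hγ' hγs' h₀

end LogisticSystems

/-- The fraction in `[0,1]` whose odds are `c` times the odds of `x`. -/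
noncomputable def rescaleOdds (c x : ℝ) : ℝ := c * x / (1 - x + c * x)

section RescaleOdds

variable {b c x : ℝ}

lemma rescaleOdds_denom_pos (hc : 0 < c) (hx : x ∈ Icc (0 : ℝ) 1) : 0 < 1 - x + c * x := by
  rcases hx.1.eq_or_lt with rfl | hx₀
  · simp
  · linarith [hx.2, mul_pos hc hx₀]

lemma rescaleOdds_mem_Icc (hc : 0 < c) (hx : x ∈ Icc (0 : ℝ) 1) :
    rescaleOdds c x ∈ Icc (0 : ℝ) 1 := by
  have hden := rescaleOdds_denom_pos hc hx
  refine ⟨div_nonneg (mul_nonneg hc.le hx.1) hden.le, (div_le_one hden).2 ?_⟩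
  linarith [hx.2]

lemma one_sub_rescaleOdds (hc : 0 < c) (hx : x ∈ Icc (0 : ℝ) 1) :
    1 - rescaleOdds c x = (1 - x) / (1 - x + c * x) := by
  have hden := (rescaleOdds_denom_pos hc hx).ne'
  rw [rescaleOdds, one_sub_div hden, add_sub_cancel_right]

lemma rescaleOdds_one (x : ℝ) : rescaleOdds 1 x = x := by
  rw [rescaleOdds, one_mul, sub_add_cancel, div_one]

lemma rescaleOdds_rescaleOdds (hc : 0 < c) (hx : x ∈ Icc (0 : ℝ) 1) :
    rescaleOdds b (rescaleOdds c x) = rescaleOdds (b * c) x := by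
  have hden := (rescaleOdds_denom_pos hc hx).ne'
  rw [rescaleOdds, one_sub_rescaleOdds hc hx, rescaleOdds, rescaleOdds, ← mul_div_assoc, ← add_div,
    div_div_div_cancel_right₀ hden, mul_assoc]

lemma rescaleOdds_inv_rescaleOdds (hc : 0 < c) (hx : x ∈ Icc (0 : ℝ) 1) :
    rescaleOdds c⁻¹ (rescaleOdds c x) = x := by
  rw [rescaleOdds_rescaleOdds hc hx, inv_mul_cancel₀ hc.ne', rescaleOdds_one]

lemma hasDerivAt_rescaleOdds {c x : ℝ → ℝ} {a b t : ℝ} (hc : 0 < c t) (hx : x t ∈ Icc (0 : ℝ) 1)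
    (hc' : HasDerivAt c (c t * b) t) (hx' : HasDerivAt x (x t * (1 - x t) * a) t) :
    HasDerivAt (fun t => rescaleOdds (c t) (x t))
      (rescaleOdds (c t) (x t) * (1 - rescaleOdds (c t) (x t)) * (a + b)) t := by
  have hden := (rescaleOdds_denom_pos hc hx).ne'
  have hcx := hc'.mul hx'
  refine (hcx.div ((hx'.const_sub 1).add hcx) hden).congr_deriv ?_
  rw [one_sub_rescaleOdds hc hx, rescaleOdds, div_mul_div_comm, ← sq, div_mul_eq_mul_div]
  congr 1
  simp only [Pi.mul_apply, Pi.add_apply]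
  ring

end RescaleOdds

/-- Multiplies the odds of the first two coordinates by a function `c` of the third. -/
noncomputable def rescaleFibers (c : ℝ → ℝ) (p : ℝ × ℝ × ℝ) : ℝ × ℝ × ℝ :=
  (rescaleOdds (c p.2.2) p.1, rescaleOdds (c p.2.2) p.2.1, p.2.2)

section RescaleFibers

variable {c : ℝ → ℝ} {p : ℝ × ℝ × ℝ}

lemma rescaleFibers_mem_stateSpace (hc : ∀ w ∈ Ioo (0 : ℝ) 1, 0 < c w) (hp : p ∈ stateSpace) :
    rescaleFibers c p ∈ stateSpace :=
  ⟨rescaleOdds_mem_Icc (hc _ hp.2.2) hp.1, rescaleOdds_mem_Icc (hc _ hp.2.2) hp.2.1, hp.2.2⟩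

lemma rescaleFibers_inv_rescaleFibers (hc : ∀ w ∈ Ioo (0 : ℝ) 1, 0 < c w) (hp : p ∈ stateSpace) :
    rescaleFibers c⁻¹ (rescaleFibers c p) = p :=
  Prod.ext (rescaleOdds_inv_rescaleOdds (hc _ hp.2.2) hp.1)
    (Prod.ext (rescaleOdds_inv_rescaleOdds (hc _ hp.2.2) hp.2.1) rfl)

lemma contDiffOn_rescaleFibers {n : WithTop ℕ∞} (hc : ∀ w ∈ Ioo (0 : ℝ) 1, 0 < c w)
    (hcn : ContDiffOn ℝ n c (Ioo 0 1)) : ContDiffOn ℝ n (rescaleFibers c) stateSpace := by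
  have hcomp : ContDiffOn ℝ n (fun p : ℝ × ℝ × ℝ => c p.2.2) stateSpace :=
    hcn.comp (by fun_prop) fun p hp => hp.2.2
  have hrescale {g : ℝ × ℝ × ℝ → ℝ} (hg : ContDiff ℝ n g)
      (hmem : ∀ p ∈ stateSpace, g p ∈ Icc (0 : ℝ) 1) :
      ContDiffOn ℝ n (fun p => rescaleOdds (c p.2.2) (g p)) stateSpace := by
    have hg := hg.contDiffOn (s := stateSpace)
    exact (hcomp.mul hg).div ((contDiffOn_const.sub hg).add (hcomp.mul hg)) fun p hp =>
      (rescaleOdds_denom_pos (hc _ hp.2.2) (hmem p hp)).ne'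
  exact (hrescale (by fun_prop) fun p hp => hp.1).prodMk
    ((hrescale (by fun_prop) fun p hp => hp.2.1).prodMk (by fun_prop))

theorem isIntegralCurve_rescaleFibers_comp {r r' : ℝ × ℝ × ℝ → ℝ × ℝ × ℝ} {γ : ℝ → ℝ × ℝ × ℝ}
    (hc : ∀ w ∈ Ioo (0 : ℝ) 1, 0 < c w) (hdiff : ∀ w ∈ Ioo (0 : ℝ) 1, DifferentiableAt ℝ c w)
    (hr' : ∀ p ∈ stateSpace, r' (rescaleFibers c p) =
      r p + (logDeriv c p.2.2 * (logisticField r p).2.2) • (1, 1, 0))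
    (hγ : IsIntegralCurve γ fun _ => logisticField r) (hγs : ∀ t, γ t ∈ stateSpace) :
    IsIntegralCurve (rescaleFibers c ∘ γ) fun _ => logisticField r' := fun t => by
  obtain ⟨hU, hV, hW⟩ := hγs t
  have h₁ : HasDerivAt (fun t => (γ t).1) (logisticField r (γ t)).1 t := (hγ t).fst
  have h₂ : HasDerivAt (fun t => (γ t).2.1) (logisticField r (γ t)).2.1 t := (hγ t).snd.fst
  have h₃ : HasDerivAt (fun t => (γ t).2.2) (logisticField r (γ t)).2.2 t := (hγ t).snd.snd
  have hcγ : HasDerivAt (fun t => c (γ t).2.2)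
      (c (γ t).2.2 * (logDeriv c (γ t).2.2 * (logisticField r (γ t)).2.2)) t := by
    refine ((hdiff _ hW).hasDerivAt.comp t h₃).congr_deriv ?_
    rw [logDeriv_apply, ← mul_assoc, mul_div_cancel₀ _ (hc _ hW).ne']
  have hU' := hasDerivAt_rescaleOdds (c := fun t => c (γ t).2.2) (hc _ hW) hU hcγ h₁
  have hV' := hasDerivAt_rescaleOdds (c := fun t => c (γ t).2.2) (hc _ hW) hV hcγ h₂
  refine (hU'.prodMk (hV'.prodMk h₃)).congr_deriv ?_
  simp only [logisticField, Function.comp_apply, hr' _ (hγs t)]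
  ext <;> simp [rescaleFibers]

end RescaleFibers

namespace EinsteinVlasov

/-- The function `H = (1 - U + σU)V`; the argument `c` is the value of `σ`. -/
def H (c : ℝ) (p : ℝ × ℝ × ℝ) : ℝ := (1 - p.1 + c * p.1) * p.2.1

/-- The right-hand sides of the system divided by `U(1 - U)`, `V(1 - V)`, `Ω(1 - Ω)`; the arguments
`c`, `a`, `b` are the values of `σ`, `σ'` and `F`. -/
def growthRates (l c a b : ℝ) (p : ℝ × ℝ × ℝ) : ℝ × ℝ × ℝ :=
  ((3 + 2 * l - (4 + 2 * l) * p.1) * (1 - p.2.1) - (1 + c - a) * H c p,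
    (2 * p.1 - 1) * (1 - p.2.1 + 2 * c * p.2.1) + a * H c p,
    -(b * H c p))

/-- The Einstein–Vlasov dynamical system with coefficients `s = σ`, `q = σ'`, `f = F` given as
functions of `Ω`; the third component of a solution `(U, V, W)` is `Ω`. -/
structure IsSolution (l : ℝ) (s q f U V W : ℝ → ℝ) : Prop where
  mem : ∀ t, U t ∈ Icc (0 : ℝ) 1 ∧ V t ∈ Icc (0 : ℝ) 1 ∧ W t ∈ Ioo (0 : ℝ) 1
  hasDerivAt : ∀ t,
    HasDerivAt U (U t * (1 - U t) * ((3 + 2 * l - (4 + 2 * l) * U t) * (1 - V t)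
      - (1 + s (W t) - q (W t)) * ((1 - U t + s (W t) * U t) * V t))) t ∧
    HasDerivAt V (V t * (1 - V t) * ((2 * U t - 1) * (1 - V t + 2 * s (W t) * V t)
      + q (W t) * ((1 - U t + s (W t) * U t) * V t))) t ∧
    HasDerivAt W (-(W t * (1 - W t) * f (W t) * ((1 - U t + s (W t) * U t) * V t))) t

/-- The regularity of the coefficients `s = σ`, `q = σ'`, `f = F`, as functions of `Ω ∈ (0,1)`, on
which well-posedness rests. The last field expresses `σ' = dσ/dη` through `dΩ/dη = Ω(1 - Ω)F/σ`. -/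
structure RegularCoefficients (s q f : ℝ → ℝ) : Prop where
  contDiffOn_s : ContDiffOn ℝ 1 s (Ioo 0 1)
  contDiffOn_f : ContDiffOn ℝ 1 f (Ioo 0 1)
  s_pos : ∀ w ∈ Ioo (0 : ℝ) 1, 0 < s w
  mul_logDeriv : ∀ w ∈ Ioo (0 : ℝ) 1, w * (1 - w) * f w * logDeriv s w = q w

/-- The rates of the Einstein–Vlasov system with coefficients `s = σ`, `q = σ'`, `f = F` given as
functions of `Ω`. -/
def rates (l : ℝ) (s q f : ℝ → ℝ) (p : ℝ × ℝ × ℝ) : ℝ × ℝ × ℝ :=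
  growthRates l (s p.2.2) (q p.2.2) (f p.2.2) p

/-- The rates after the odds of `U` and `V` have been multiplied by `s`, which removes `σ'`. -/
noncomputable def reducedRates (l : ℝ) (s f : ℝ → ℝ) (p : ℝ × ℝ × ℝ) : ℝ × ℝ × ℝ :=
  growthRates l (s p.2.2) 0 (f p.2.2) (rescaleFibers s⁻¹ p)

section Solutions

variable {l : ℝ} {s q f U V W : ℝ → ℝ}

lemma isSolution_iff : IsSolution l s q f U V W ↔
    (∀ t, (U t, V t, W t) ∈ stateSpace) ∧ IsIntegralCurve (fun t => (U t, V t, W t))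
      fun _ => logisticField (rates l s q f) := by
  have hΩ (t : ℝ) : -(W t * (1 - W t) * f (W t) * ((1 - U t + s (W t) * U t) * V t)) =
      W t * (1 - W t) * -(f (W t) * ((1 - U t + s (W t) * U t) * V t)) := by ring
  refine ⟨fun h => ⟨h.mem, fun t => ?_⟩, fun ⟨hmem, hcurve⟩ => ⟨hmem, fun t => ?_⟩⟩
  · obtain ⟨hU, hV, hW⟩ := h.hasDerivAt t
    exact hU.prodMk (hV.prodMk (hΩ t ▸ hW))
  · rw [hΩ t]
    exact ⟨(hcurve t).fst, (hcurve t).snd.fst, (hcurve t).snd.snd⟩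

lemma RegularCoefficients.inv_pos (h : RegularCoefficients s q f) :
    ∀ w ∈ Ioo (0 : ℝ) 1, 0 < s⁻¹ w :=
  fun w hw => _root_.inv_pos.2 (h.s_pos w hw)

lemma RegularCoefficients.differentiableAt (h : RegularCoefficients s q f) {w : ℝ}
    (hw : w ∈ Ioo (0 : ℝ) 1) : DifferentiableAt ℝ s w :=
  (h.contDiffOn_s.contDiffAt (isOpen_Ioo.mem_nhds hw)).differentiableAt one_ne_zero

lemma RegularCoefficients.logDeriv_mul (h : RegularCoefficients s q f) {w : ℝ}
    (hw : w ∈ Ioo (0 : ℝ) 1) (x : ℝ) :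
    logDeriv s w * (w * (1 - w) * -(f w * x)) = -(q w * x) := by
  rw [← h.mul_logDeriv w hw]
  ring

lemma RegularCoefficients.logDeriv_inv (h : RegularCoefficients s q f) {w : ℝ}
    (hw : w ∈ Ioo (0 : ℝ) 1) : logDeriv s⁻¹ w = -logDeriv s w := by
  change logDeriv (fun w => (s w)⁻¹) w = _
  simpa using logDeriv_fun_zpow (h.differentiableAt hw) (-1)

lemma growthRates_eq_add (l c a b : ℝ) (p : ℝ × ℝ × ℝ) :
    growthRates l c a b p = growthRates l c 0 b p + (a * H c p) • (1, 1, 0) := by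
  ext <;> simp only [growthRates, Prod.fst_add, Prod.snd_add, Prod.smul_fst, Prod.smul_snd,
    smul_eq_mul] <;> ring

lemma contDiff_growthRates {n : WithTop ℕ∞} (l a : ℝ) :
    ContDiff ℝ n fun x : ℝ × ℝ × ℝ × ℝ × ℝ => growthRates l x.1 a x.2.1 x.2.2 := by
  unfold growthRates H
  fun_prop

lemma contDiffOn_reducedRates (h : RegularCoefficients s q f) :
    ContDiffOn ℝ 1 (reducedRates l s f) stateSpace := by
  have hthird {g : ℝ → ℝ} (hg : ContDiffOn ℝ 1 g (Ioo 0 1)) :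
      ContDiffOn ℝ 1 (fun p : ℝ × ℝ × ℝ => g p.2.2) stateSpace :=
    hg.comp (by fun_prop) fun p hp => hp.2.2
  have hrescale : ContDiffOn ℝ 1 (rescaleFibers s⁻¹) stateSpace :=
    contDiffOn_rescaleFibers h.inv_pos (h.contDiffOn_s.inv fun w hw => (h.s_pos w hw).ne')
  exact (contDiff_growthRates l 0).comp_contDiffOn
    ((hthird h.contDiffOn_s).prodMk ((hthird h.contDiffOn_f).prodMk hrescale))

lemma exists_norm_growthRates_le (l a C M : ℝ) :
    ∃ L, ∀ c ∈ Icc 0 C, ∀ b ∈ Icc 0 M, ∀ p ∈ stateSpace, ‖growthRates l c a b p‖ ≤ L := by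
  have hcompact : IsCompact
      (Icc 0 C ×ˢ Icc 0 M ×ˢ Icc (0 : ℝ) 1 ×ˢ Icc (0 : ℝ) 1 ×ˢ Icc (0 : ℝ) 1) :=
    isCompact_Icc.prod (isCompact_Icc.prod (isCompact_Icc.prod (isCompact_Icc.prod isCompact_Icc)))
  obtain ⟨L, hL⟩ := hcompact.exists_bound_of_continuousOn
    (contDiff_growthRates (n := 0) l a).continuous.continuousOn
  exact ⟨L, fun c hc b hb p hp =>
    hL (c, b, p) ⟨hc, hb, hp.1, hp.2.1, Ioo_subset_Icc_self hp.2.2⟩⟩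

lemma IsSolution.isIntegralCurve_reducedRates (hsol : IsSolution l s q f U V W)
    (h : RegularCoefficients s q f) :
    IsIntegralCurve (fun t => rescaleFibers s (U t, V t, W t))
      fun _ => logisticField (reducedRates l s f) := by
  obtain ⟨hmem, hcurve⟩ := isSolution_iff.1 hsol
  refine isIntegralCurve_rescaleFibers_comp h.s_pos
    (fun w hw => h.differentiableAt hw) (fun p hp => ?_) hcurve hmem
  have hlog : logDeriv s p.2.2 * (logisticField (rates l s q f) p).2.2 =
      -(q p.2.2 * H (s p.2.2) p) := h.logDeriv_mul hp.2.2 _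
  rw [reducedRates, rescaleFibers_inv_rescaleFibers h.s_pos hp, hlog, rates,
    growthRates_eq_add _ _ (q p.2.2), neg_smul, add_neg_cancel_right]
  rfl

lemma isSolution_of_isIntegralCurve_reducedRates (h : RegularCoefficients s q f)
    {γ : ℝ → ℝ × ℝ × ℝ}
    (hγ : IsIntegralCurve γ fun _ => logisticField (reducedRates l s f))
    (hγs : ∀ t, γ t ∈ stateSpace) :
    IsSolution l s q f (fun t => (rescaleFibers s⁻¹ (γ t)).1)
      (fun t => (rescaleFibers s⁻¹ (γ t)).2.1) fun t => (rescaleFibers s⁻¹ (γ t)).2.2 := by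
  refine isSolution_iff.2 ⟨fun t => rescaleFibers_mem_stateSpace h.inv_pos (hγs t), ?_⟩
  refine isIntegralCurve_rescaleFibers_comp h.inv_pos
    (fun w hw => (h.differentiableAt hw).inv (h.s_pos w hw).ne') (fun p hp => ?_) hγ hγs
  have hlog : logDeriv s p.2.2 * (logisticField (reducedRates l s f) p).2.2 =
      -(q p.2.2 * H (s p.2.2) (rescaleFibers s⁻¹ p)) := h.logDeriv_mul hp.2.2 _
  rw [h.logDeriv_inv hp.2.2, neg_mul, hlog, neg_neg, reducedRates]
  exact growthRates_eq_add _ _ _ _ _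

theorem exists_isSolution (h : RegularCoefficients s q f) {C M : ℝ}
    (hs : ∀ w ∈ Ioo (0 : ℝ) 1, s w ≤ C) (hf : ∀ w ∈ Ioo (0 : ℝ) 1, f w ∈ Icc 0 M) {U₀ V₀ W₀ : ℝ}
    (h₀ : (U₀, V₀, W₀) ∈ stateSpace) :
    ∃ U V W : ℝ → ℝ, (U 0 = U₀ ∧ V 0 = V₀ ∧ W 0 = W₀) ∧ IsSolution l s q f U V W := by
  obtain ⟨L, hL⟩ := exists_norm_growthRates_le l 0 C M
  have hbound (p) (hp : p ∈ stateSpace) : ‖reducedRates l s f p‖ ≤ L :=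
    hL _ ⟨(h.s_pos _ hp.2.2).le, hs _ hp.2.2⟩ _ (hf _ hp.2.2) _
      (rescaleFibers_mem_stateSpace h.inv_pos hp)
  obtain ⟨γ, hγ₀, hγs, hγ⟩ := exists_isIntegralCurve_logisticField (contDiffOn_reducedRates h)
    hbound (rescaleFibers_mem_stateSpace h.s_pos h₀)
  have hstart : rescaleFibers s⁻¹ (γ 0) = (U₀, V₀, W₀) := by
    rw [hγ₀, rescaleFibers_inv_rescaleFibers h.s_pos h₀]
  exact ⟨_, _, _, by simp [hstart], isSolution_of_isIntegralCurve_reducedRates h hγ hγs⟩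

theorem isSolution_unique (h : RegularCoefficients s q f) {U' V' W' : ℝ → ℝ}
    (hsol : IsSolution l s q f U V W) (hsol' : IsSolution l s q f U' V' W') {t₀ : ℝ}
    (hU : U t₀ = U' t₀) (hV : V t₀ = V' t₀) (hW : W t₀ = W' t₀) : U = U' ∧ V = V' ∧ W = W' := by
  have hreduced : (fun t => rescaleFibers s (U t, V t, W t)) =
      fun t => rescaleFibers s (U' t, V' t, W' t) :=
    isIntegralCurve_logisticField_unique (contDiffOn_reducedRates h)
      (hsol.isIntegralCurve_reducedRates h)
      (fun t => rescaleFibers_mem_stateSpace h.s_pos (hsol.mem t))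
      (hsol'.isIntegralCurve_reducedRates h)
      (fun t => rescaleFibers_mem_stateSpace h.s_pos (hsol'.mem t)) (by rw [hU, hV, hW])
  have heq (t : ℝ) : (U t, V t, W t) = (U' t, V' t, W' t) := by
    rw [← rescaleFibers_inv_rescaleFibers (p := (U t, V t, W t)) h.s_pos (hsol.mem t),
      congrFun hreduced t, rescaleFibers_inv_rescaleFibers h.s_pos (hsol'.mem t)]
  exact ⟨funext fun t => congrArg (·.1) (heq t), funext fun t => congrArg (·.2.1) (heq t),
    funext fun t => congrArg (·.2.2) (heq t)⟩

end Solutions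

/-- The bounded variable `Ω = ω / (1 + ω)`. -/
noncomputable def boundedVar (ω : ℝ → ℝ) (η : ℝ) : ℝ := ω η / (1 + ω η)

section BoundedVariable

variable {σ σ' ω ω' F s q f : ℝ → ℝ}

lemma surjOn_boundedVar (hsurj : SurjOn ω (Ioi 0) (Ioi 0)) :
    SurjOn (boundedVar ω) (Ioi 0) (Ioo 0 1) := by
  intro w hw
  have hw' : 0 < 1 - w := sub_pos.2 hw.2
  obtain ⟨η, hη, hωη⟩ := hsurj (div_pos hw.1 hw')
  refine ⟨η, hη, ?_⟩
  rw [boundedVar, hωη]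
  field_simp
  ring

lemma hasDerivAt_boundedVar {η d : ℝ} (hω : HasDerivAt ω d η) (hpos : 0 < ω η) :
    HasDerivAt (boundedVar ω) (boundedVar ω η * (1 - boundedVar ω η) * (d / ω η)) η := by
  have hden : 1 + ω η ≠ 0 := by positivity
  refine (hω.div (hω.const_add 1) hden).congr_deriv ?_
  rw [boundedVar]
  field_simp

lemma boundedVar_mul_one_sub_ne_zero {η : ℝ} (hpos : 0 < ω η) :
    boundedVar ω η * (1 - boundedVar ω η) ≠ 0 := by
  have hden : 0 < 1 + ω η := by positivity
  rw [boundedVar, one_sub_div hden.ne', add_sub_cancel_right]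
  positivity

lemma contDiffOn_of_comp_boundedVar {n : WithTop ℕ∞} (hn : n ≠ 0) {g h : ℝ → ℝ}
    (hω : ContDiffOn ℝ n ω (Ioi 0))
    (hω' : ∀ η, 0 < η → HasDerivAt ω (ω' η) η) (hpos : ∀ η, 0 < η → 0 < ω η)
    (hne : ∀ η, 0 < η → ω' η ≠ 0) (hsurj : SurjOn ω (Ioi 0) (Ioi 0))
    (hg : ContDiffOn ℝ n g (Ioi 0)) (hcomp : ∀ η, 0 < η → h (boundedVar ω η) = g η) :
    ContDiffOn ℝ n h (Ioo 0 1) := by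
  intro w hw
  obtain ⟨η, hη, rfl⟩ := surjOn_boundedVar hsurj hw
  have hmem : Ioi (0 : ℝ) ∈ 𝓝 η := Ioi_mem_nhds hη
  have hωη : ContDiffAt ℝ n ω η := hω.contDiffAt hmem
  have hderiv_ne := mul_ne_zero (boundedVar_mul_one_sub_ne_zero (hpos η hη))
    (div_ne_zero (hne η hη) (hpos η hη).ne')
  have hboundedVar : ContDiffAt ℝ n (boundedVar ω) η :=
    hωη.div (contDiffAt_const.add hωη) (by linarith [hpos η hη])
  exact (contDiffAt_of_comp_contDiffAt hboundedVar
    ((hasDerivAt_boundedVar (hω' η hη) (hpos η hη)).hasFDerivAt_equiv hderiv_ne) hn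
    (hg.contDiffAt hmem) (by filter_upwards [hmem] with x hx using hcomp x hx)).contDiffWithinAt

theorem regularCoefficients_of_comp_boundedVar (hσ : ∀ η, 0 < η → HasDerivAt σ (σ' η) η)
    (hσ' : ContinuousOn σ' (Ioi 0)) (hσpos : ∀ η, 0 < η → 0 < σ η)
    (hω : ContDiffOn ℝ 2 ω (Ioi 0)) (hω' : ∀ η, 0 < η → HasDerivAt ω (ω' η) η)
    (hpos : ∀ η, 0 < η → 0 < ω η) (hne : ∀ η, 0 < η → ω' η ≠ 0)
    (hsurj : SurjOn ω (Ioi 0) (Ioi 0)) (hF : ∀ η, 0 < η → F η = σ η * (ω' η / ω η))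
    (hs : ∀ η, 0 < η → s (boundedVar ω η) = σ η) (hq : ∀ η, 0 < η → q (boundedVar ω η) = σ' η)
    (hf : ∀ η, 0 < η → f (boundedVar ω η) = F η) : RegularCoefficients s q f := by
  have htransfer {g h : ℝ → ℝ} := contDiffOn_of_comp_boundedVar one_ne_zero (g := g) (h := h)
    (hω.of_le one_le_two) hω' hpos hne hsurj
  have hσ₁ : ContDiffOn ℝ 1 σ (Ioi 0) := contDiffOn_one_of_hasDerivAt isOpen_Ioi hσ hσ'
  have hω'₁ : ContDiffOn ℝ 1 ω' (Ioi 0) :=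
    (hω.deriv_of_isOpen isOpen_Ioi (by norm_num)).congr fun η hη => (hω' η hη).deriv.symm
  have hF₁ : ContDiffOn ℝ 1 F (Ioi 0) :=
    (hσ₁.mul (hω'₁.div (hω.of_le one_le_two) fun η hη => (hpos η hη).ne')).congr hF
  have hs₁ : ContDiffOn ℝ 1 s (Ioo 0 1) := htransfer hσ₁ hs
  refine ⟨hs₁, htransfer hF₁ hf, fun w hw => ?_, fun w hw => ?_⟩ <;>
    obtain ⟨η, hη, rfl⟩ := surjOn_boundedVar hsurj hw
  · exact (hσpos η hη).trans_eq (hs η hη).symm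
  have hchain : deriv s (boundedVar ω η) *
      (boundedVar ω η * (1 - boundedVar ω η) * (ω' η / ω η)) = σ' η := by
    have hsη := (hs₁.contDiffAt (isOpen_Ioo.mem_nhds hw)).differentiableAt one_ne_zero
    refine (hsη.hasDerivAt.comp η (hasDerivAt_boundedVar (hω' η hη) (hpos η hη))).unique ?_
    exact (hσ η hη).congr_of_eventuallyEq
      (by filter_upwards [Ioi_mem_nhds hη] with x hx using hs x hx)
  rw [hf η hη, hF η hη, hq η hη, logDeriv_apply, hs η hη, ← hchain]
  field_simp [(hσpos η hη).ne']

end BoundedVariable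

end EinsteinVlasov

open EinsteinVlasov in
theorem stmt15_general
    (l : ℝ) (σ σ' : ℝ → ℝ)
    (hσderiv : ∀ η : ℝ, 0 < η → HasDerivAt σ (σ' η) η)
    (hσ'cont : ContinuousOn σ' (Ioi 0))
    (C : ℝ) (hσrange : ∀ η : ℝ, 0 < η → σ η ∈ Ioc 0 C)
    (ω ω' : ℝ → ℝ)
    (hωsmooth : ContDiffOn ℝ 2 ω (Ioi 0))
    (hωderiv : ∀ η : ℝ, 0 < η → HasDerivAt ω (ω' η) η)
    (hωpos : ∀ η : ℝ, 0 < η → 0 < ω η)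
    (F : ℝ → ℝ) (hFdef : ∀ η : ℝ, 0 < η → F η = σ η * (ω' η / ω η))
    (M : ℝ) (hFbounds : ∀ η : ℝ, 0 < η → F η ∈ Ioc 0 M)
    (hωsurj : ∀ y : ℝ, 0 < y → ∃ η : ℝ, 0 < η ∧ ω η = y)
    (σΩ σ'Ω FΩ : ℝ → ℝ)
    (hσΩ : ∀ η : ℝ, 0 < η → σΩ (ω η / (1 + ω η)) = σ η)
    (hσ'Ω : ∀ η : ℝ, 0 < η → σ'Ω (ω η / (1 + ω η)) = σ' η)
    (hFΩ : ∀ η : ℝ, 0 < η → FΩ (ω η / (1 + ω η)) = F η)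
    (U₀ V₀ Ω₀ : ℝ) (hU₀ : U₀ ∈ Icc (0 : ℝ) 1) (hV₀ : V₀ ∈ Icc (0 : ℝ) 1)
    (hΩ₀ : Ω₀ ∈ Ioo (0 : ℝ) 1) :
    ∃ U V W : ℝ → ℝ, (U 0 = U₀ ∧ V 0 = V₀ ∧ W 0 = Ω₀) ∧ IsSolution l σΩ σ'Ω FΩ U V W ∧
      ∀ U' V' W' : ℝ → ℝ, (U' 0 = U₀ ∧ V' 0 = V₀ ∧ W' 0 = Ω₀) →
        IsSolution l σΩ σ'Ω FΩ U' V' W' → U' = U ∧ V' = V ∧ W' = W := by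
  have hω'ne (η : ℝ) (hη : 0 < η) : ω' η ≠ 0 := fun hzero =>
    (hFbounds η hη).1.ne' (by rw [hFdef η hη, hzero, zero_div, mul_zero])
  have hregular : RegularCoefficients σΩ σ'Ω FΩ :=
    regularCoefficients_of_comp_boundedVar hσderiv hσ'cont (fun η hη => (hσrange η hη).1) hωsmooth
      hωderiv hωpos hω'ne hωsurj hFdef hσΩ hσ'Ω hFΩ
  have hσ_le (w : ℝ) (hw : w ∈ Ioo (0 : ℝ) 1) : σΩ w ≤ C := by
    obtain ⟨η, hη, rfl⟩ := surjOn_boundedVar hωsurj hw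
    exact (hσΩ η hη).trans_le (hσrange η hη).2
  have hF_mem (w : ℝ) (hw : w ∈ Ioo (0 : ℝ) 1) : FΩ w ∈ Icc 0 M := by
    obtain ⟨η, hη, rfl⟩ := surjOn_boundedVar hωsurj hw
    exact hFΩ η hη ▸ Ioc_subset_Icc_self (hFbounds η hη)
  obtain ⟨U, V, W, ⟨hU, hV, hW⟩, hsol⟩ :=
    exists_isSolution (l := l) hregular hσ_le hF_mem ⟨hU₀, hV₀, hΩ₀⟩
  exact ⟨U, V, W, ⟨hU, hV, hW⟩, hsol, fun U' V' W' ⟨hU', hV', hW'⟩ hsol' =>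
    isSolution_unique hregular hsol' hsol (hU'.trans hU.symm) (hV'.trans hV.symm)
      (hW'.trans hW.symm)⟩

/-- For every initial point `(U₀,V₀,Ω₀) ∈ [0,1]² × (0,1)` there is a unique global `C¹` solution of the Einstein–Vlasov dynamical system through it, taking values in `[0,1]² × (0,1)` for all `λ ∈ ℝ`. -/
theorem stmt15
    (l : ℝ) (hl : -1 < l)
    (σ σ' : ℝ → ℝ)
    (hσderiv : ∀ η : ℝ, 0 < η → HasDerivAt σ (σ' η) η)
    (hσ'cont : ContinuousOn σ' (Ioi 0))
    (hσrange : ∀ η : ℝ, 0 < η → σ η ∈ Ioo 0 (1 / (3 + 2 * l)))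
    (hσ0 : Tendsto σ (nhdsWithin 0 (Ioi 0)) (nhds 0))
    (k₁ k₂ : ℝ) (hk₁ : 0 < k₁) (hk₁₂ : k₁ < k₂)
    (hσ'near : ∃ η₀ > (0:ℝ), ∀ η ∈ Ioo (0:ℝ) η₀, σ' η ∈ Ioo k₁ k₂)
    (ω ω' : ℝ → ℝ)
    (hωsmooth : ContDiffOn ℝ (⊤ : ℕ∞) ω (Ioi 0))
    (hωderiv : ∀ η : ℝ, 0 < η → HasDerivAt ω (ω' η) η)
    (hωpos : ∀ η : ℝ, 0 < η → 0 < ω η)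
    (hωmono : StrictMonoOn ω (Ioi 0))
    (hω0 : Tendsto ω (nhdsWithin 0 (Ioi 0)) (nhds 0))
    (F : ℝ → ℝ) (hFdef : ∀ η : ℝ, 0 < η → F η = σ η * (ω' η / ω η))
    (Flo Fhi : ℝ) (hFlo : 0 < Flo)
    (hFbounds : ∀ η : ℝ, 0 < η → F η ∈ Icc Flo Fhi)
    (hωsurj : ∀ y : ℝ, 0 < y → ∃ η : ℝ, 0 < η ∧ ω η = y)
    (σΩ σ'Ω FΩ : ℝ → ℝ)
    (hσΩ : ∀ η : ℝ, 0 < η → σΩ (ω η / (1 + ω η)) = σ η)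
    (hσ'Ω : ∀ η : ℝ, 0 < η → σ'Ω (ω η / (1 + ω η)) = σ' η)
    (hFΩ : ∀ η : ℝ, 0 < η → FΩ (ω η / (1 + ω η)) = F η)
    (U₀ V₀ Ω₀ : ℝ) (hU₀ : U₀ ∈ Icc (0:ℝ) 1) (hV₀ : V₀ ∈ Icc (0:ℝ) 1)
    (hΩ₀ : Ω₀ ∈ Ioo (0:ℝ) 1) :
    ∃ U V W : ℝ → ℝ,
      (U 0 = U₀ ∧ V 0 = V₀ ∧ W 0 = Ω₀) ∧
      (∀ t : ℝ, U t ∈ Icc (0:ℝ) 1 ∧ V t ∈ Icc (0:ℝ) 1 ∧ W t ∈ Ioo (0:ℝ) 1) ∧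
      (∀ t : ℝ,
        HasDerivAt U (U t * (1 - U t) * ((3 + 2 * l - (4 + 2 * l) * U t) * (1 - V t)
          - (1 + σΩ (W t) - σ'Ω (W t)) * ((1 - U t + σΩ (W t) * U t) * V t))) t ∧
        HasDerivAt V (V t * (1 - V t) * ((2 * U t - 1) * (1 - V t + 2 * σΩ (W t) * V t)
          + σ'Ω (W t) * ((1 - U t + σΩ (W t) * U t) * V t))) t ∧
        HasDerivAt W (-(W t * (1 - W t) * FΩ (W t) * ((1 - U t + σΩ (W t) * U t) * V t))) t) ∧
      ∀ U' V' W' : ℝ → ℝ,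
        (U' 0 = U₀ ∧ V' 0 = V₀ ∧ W' 0 = Ω₀) →
        (∀ t : ℝ, U' t ∈ Icc (0:ℝ) 1 ∧ V' t ∈ Icc (0:ℝ) 1 ∧ W' t ∈ Ioo (0:ℝ) 1) →
        (∀ t : ℝ,
          HasDerivAt U' (U' t * (1 - U' t) * ((3 + 2 * l - (4 + 2 * l) * U' t) * (1 - V' t)
            - (1 + σΩ (W' t) - σ'Ω (W' t)) * ((1 - U' t + σΩ (W' t) * U' t) * V' t))) t ∧
          HasDerivAt V' (V' t * (1 - V' t) * ((2 * U' t - 1) * (1 - V' t + 2 * σΩ (W' t) * V' t)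
            + σ'Ω (W' t) * ((1 - U' t + σΩ (W' t) * U' t) * V' t))) t ∧
          HasDerivAt W' (-(W' t * (1 - W' t) * FΩ (W' t) * ((1 - U' t + σΩ (W' t) * U' t) * V' t))) t) →
        (U' = U ∧ V' = V ∧ W' = W) := by
  obtain ⟨U, V, W, h₀, ⟨hmem, hderiv⟩, hunique⟩ := stmt15_general l σ σ' hσderiv hσ'cont
    (1 / (3 + 2 * l)) (fun η hη => Ioo_subset_Ioc_self (hσrange η hη)) ω ω'
    (hωsmooth.of_le (WithTop.coe_le_coe.2 (le_top : (2 : ℕ∞) ≤ ⊤))) hωderiv hωpos F hFdef Fhi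
    (fun η hη => ⟨hFlo.trans_le (hFbounds η hη).1, (hFbounds η hη).2⟩) hωsurj
    σΩ σ'Ω FΩ hσΩ hσ'Ω hFΩ U₀ V₀ Ω₀ hU₀ hV₀ hΩ₀
  exact ⟨U, V, W, h₀, hmem, hderiv, fun U' V' W' h₀' hmem' hderiv' =>
    hunique U' V' W' h₀' ⟨hmem', hderiv'⟩⟩
end
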